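/- Let R be a proper representation of a graph G by piecewise-linear curves in the plane, and call a point special if it is an endpoint of a curve of R, a bend of a curve of R, or an intersection point of R. Then there exists a plane graph H, which is a subdivision of a 3-connected planar graph, drawn in the plane so that: (P1) the edges of H are drawn as vertical and horizontal segments, every internal face of H is a rectangle, and the outer face of H is disjoint from all curves of R; (P2) no curve of R passes through a vertex of H, and no edge of H passes through a special point of R; (P3) every face of H contains at most one special point of R, and no two faces containing a special point are adjacent; (P4) every edge of H is intersected at most once by the curves of R; (P5) every face of H is intersected by at most two curves of R, and if a face is intersected by two curves of R then these two curves intersect inside that face; (P6) every curve of R intersects the boundary of any single face of H at most twice. -/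

import Mathlib

open Set Metric

/-- A point of the plane. -/
abbrev Pt : Type := ℝ × ℝ

/-- The trace (image) of a curve parametrized over `[0,1]`. -/
def Im (γ : ℝ → Pt) : Set Pt := γ '' Icc 0 1

/-- `γ` is affine on the interval `[s,t]`. -/
def AffOn (γ : ℝ → Pt) (s t : ℝ) : Prop :=
  ∃ a d : Pt, ∀ x ∈ Icc s t, γ x = (a.1 + x * d.1, a.2 + x * d.2)

/-- `γ` is affine on `[s,t]` with a horizontal or vertical direction. -/
def AxisAffOn (γ : ℝ → Pt) (s t : ℝ) : Prop :=
  ∃ a d : Pt, (d.1 = 0 ∨ d.2 = 0) ∧ ∀ x ∈ Icc s t, γ x = (a.1 + x * d.1, a.2 + x * d.2)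

/-- `γ` restricted to `[0,1]` is a simple piecewise linear curve consisting of at most
`n` straight segments. -/
def IsPLCurveN (n : ℕ) (γ : ℝ → Pt) : Prop :=
  InjOn γ (Icc 0 1) ∧
    ∃ t : Fin (n + 1) → ℝ, t 0 = 0 ∧ t (Fin.last n) = 1 ∧ Monotone t ∧
      ∀ i : Fin n, AffOn γ (t i.castSucc) (t i.succ)

/-- `γ` is a simple piecewise linear curve (finitely many segments). -/
def IsPLCurve (γ : ℝ → Pt) : Prop := ∃ n, IsPLCurveN n γ

/-- `γ` restricted to `[0,1]` is a simple rectilinear (axis-parallel) curve consisting of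
at most `n` horizontal or vertical straight segments. -/
def IsRectCurveN (n : ℕ) (γ : ℝ → Pt) : Prop :=
  InjOn γ (Icc 0 1) ∧
    ∃ t : Fin (n + 1) → ℝ, t 0 = 0 ∧ t (Fin.last n) = 1 ∧ Monotone t ∧
      ∀ i : Fin n, AxisAffOn γ (t i.castSucc) (t i.succ)

/-- `γ` is a simple rectilinear (axis-parallel) piecewise linear curve. -/
def IsRectCurve (γ : ℝ → Pt) : Prop := ∃ n, IsRectCurveN n γ

/-- A `k`-bend axis-parallel curve: a simple curve that is a concatenation of at most
`k+1` horizontal or vertical straight segments (hence has at most `k` bends). -/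
def IsKBendCurve (k : ℕ) (γ : ℝ → Pt) : Prop := IsRectCurveN (k + 1) γ

/-- `R` is an intersection representation of `G` by curves:
two distinct vertices are adjacent iff their curves meet. -/
def Represents {V : Type*} (G : SimpleGraph V) (R : V → ℝ → Pt) : Prop :=
  ∀ u v : V, u ≠ v → ((Im (R u) ∩ Im (R v)).Nonempty ↔ G.Adj u v)

/-- The set of intersection points of a representation: points lying on (at least)
two distinct curves. -/
def InPts {V : Type*} (R : V → ℝ → Pt) : Set Pt :=
  {p | ∃ u v : V, u ≠ v ∧ p ∈ Im (R u) ∧ p ∈ Im (R v)}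

/-- The set `B` crosses (transversally, from one side to the other) the set `A` at `p`:
in every small ball around `p` there are points of `B` off `A` that cannot be joined by a
connected subset of the ball avoiding `A`. -/
def CrossesAt (A B : Set Pt) (p : Pt) : Prop :=
  ∃ ε₀ > (0:ℝ), ∀ ε : ℝ, 0 < ε → ε ≤ ε₀ →
    ∃ x y : Pt, x ∈ (B ∩ ball p ε) \ A ∧ y ∈ (B ∩ ball p ε) \ A ∧
      ∀ C : Set Pt, C ⊆ ball p ε \ A → IsConnected C → ¬(x ∈ C ∧ y ∈ C)

/-- A proper representation: finitely many intersection points (in particular no two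
curves overlap), every intersection point lies on exactly two curves which cross
(do not touch) there, and no endpoint of a curve lies on another curve. -/
def IsProperRep {V : Type*} (R : V → ℝ → Pt) : Prop :=
  (InPts R).Finite ∧
    (∀ p : Pt, ∀ u v w : V, u ≠ v → u ≠ w → v ≠ w →
      ¬(p ∈ Im (R u) ∧ p ∈ Im (R v) ∧ p ∈ Im (R w))) ∧
    (∀ u v : V, u ≠ v → R u 0 ∉ Im (R v) ∧ R u 1 ∉ Im (R v)) ∧
    (∀ u v : V, u ≠ v → ∀ p ∈ Im (R u) ∩ Im (R v),
      CrossesAt (Im (R u)) (Im (R v)) p ∧ CrossesAt (Im (R v)) (Im (R u)) p)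

/-- Membership in the class `B_k`-VPG. -/
def InBkVPG (k : ℕ) {V : Type*} (G : SimpleGraph V) : Prop :=
  ∃ R : V → ℝ → Pt, (∀ v, IsKBendCurve k (R v)) ∧ Represents G R

/-- Membership in the class SEG of intersection graphs of straight line segments. -/
def InSEG {V : Type*} (G : SimpleGraph V) : Prop :=
  ∃ S : V → Pt × Pt, (∀ v, (S v).1 ≠ (S v).2) ∧
    ∀ u v : V, u ≠ v →
      ((segment ℝ (S u).1 (S u).2 ∩ segment ℝ (S v).1 (S v).2).Nonempty ↔ G.Adj u v)

/-- Membership in the class 3-DIR: intersection graphs of straight line segments using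
at most three distinct directions (slopes). -/
def In3DIR {V : Type*} (G : SimpleGraph V) : Prop :=
  ∃ D : Fin 3 → Pt, ∃ S : V → Pt × Pt,
    (∀ v, (S v).1 ≠ (S v).2) ∧
    (∀ v, ∃ i : Fin 3, ∃ c : ℝ, (S v).2 - (S v).1 = c • D i) ∧
    ∀ u v : V, u ≠ v →
      ((segment ℝ (S u).1 (S u).2 ∩ segment ℝ (S v).1 (S v).2).Nonempty ↔ G.Adj u v)

/-- `L` is a (straight) line in the plane. -/
def IsLine (L : Set Pt) : Prop :=
  ∃ p d : Pt, d ≠ 0 ∧ L = {x : Pt | ∃ r : ℝ, x = (p.1 + r * d.1, p.2 + r * d.2)}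

/-- `z` is a bend point of the set `S` (trace of a curve): `S` is not locally straight
at `z`, i.e. no neighbourhood of `z` in `S` is contained in a line. -/
def IsBendPt (S : Set Pt) (z : Pt) : Prop :=
  z ∈ S ∧ ∀ ε > (0:ℝ), ¬ ∃ L : Set Pt, IsLine L ∧ S ∩ ball z ε ⊆ L

/-- The special points of a representation `R`: endpoints of curves, bends of curves,
and intersection points. -/
def SpecialPts {V : Type*} (R : V → ℝ → Pt) : Set Pt :=
  {z | (∃ v, z = R v 0 ∨ z = R v 1) ∨ (∃ v, IsBendPt (Im (R v)) z) ∨ z ∈ InPts R}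

/-- A plane graph drawn with horizontal and vertical straight-line edges:
edges may meet only at common endpoints, and no vertex lies in the interior
of an edge. -/
structure GridPlaneGraph where
  verts : Finset Pt
  edges : Finset (Pt × Pt)
  ends_mem : ∀ e ∈ edges, e.1 ∈ verts ∧ e.2 ∈ verts
  nondeg : ∀ e ∈ edges, e.1 ≠ e.2
  axisAligned : ∀ e ∈ edges, e.1.1 = e.2.1 ∨ e.1.2 = e.2.2
  meet_at_ends : ∀ e ∈ edges, ∀ f ∈ edges, e ≠ f → (e.1, e.2) ≠ (f.2, f.1) →
    ∀ x : Pt, x ∈ segment ℝ e.1 e.2 → x ∈ segment ℝ f.1 f.2 →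
      (x = e.1 ∨ x = e.2) ∧ (x = f.1 ∨ x = f.2)
  no_vertex_interior : ∀ e ∈ edges, ∀ v ∈ verts, v ∈ segment ℝ e.1 e.2 → v = e.1 ∨ v = e.2

/-- The drawing of a plane graph: the union of its (closed) edge segments. -/
def GridPlaneGraph.drawing (H : GridPlaneGraph) : Set Pt :=
  ⋃ e ∈ H.edges, segment ℝ e.1 e.2

/-- The faces of a plane graph: connected components of the complement of the drawing. -/
def GridPlaneGraph.IsFace (H : GridPlaneGraph) (F : Set Pt) : Prop :=
  ∃ x ∉ H.drawing, F = connectedComponentIn H.drawingᶜ x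

/-- The abstract graph underlying a plane graph. -/
def GridPlaneGraph.graph (H : GridPlaneGraph) : SimpleGraph {p : Pt // p ∈ H.verts} :=
  SimpleGraph.fromRel (fun a b => ((a : Pt), (b : Pt)) ∈ H.edges)

/-- `H` is a subdivision of `G₀`: the branch vertices are embedded by `φ`, each edge
of `G₀` is replaced by a path of `H`, distinct edge-paths are internally disjoint, and
together these paths cover all vertices and edges of `H`. -/
def IsSubdivisionOf {W U : Type*} (H : SimpleGraph W) (G₀ : SimpleGraph U) : Prop :=
  ∃ φ : U ↪ W, ∃ P : ∀ ⦃u v : U⦄, G₀.Adj u v → H.Walk (φ u) (φ v),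
    (∀ ⦃u v : U⦄ (h : G₀.Adj u v), (P h).IsPath) ∧
    (∀ ⦃u v : U⦄ (h : G₀.Adj u v), ∀ w ∈ (P h).support,
        w ∈ Set.range φ → w = φ u ∨ w = φ v) ∧
    (∀ ⦃u v : U⦄ (h : G₀.Adj u v) ⦃u' v' : U⦄ (h' : G₀.Adj u' v'),
        s(u, v) ≠ s(u', v') → ∀ w, w ∈ (P h).support → w ∈ (P h').support →
          w ∈ Set.range φ) ∧
    (∀ e ∈ H.edgeSet, ∃ u v : U, ∃ h : G₀.Adj u v, e ∈ (P h).edges) ∧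
    (∀ w : W, w ∈ Set.range φ ∨ ∃ u v : U, ∃ h : G₀.Adj u v, w ∈ (P h).support)

/-- A 3-connected graph: at least 4 vertices, and deleting any set of at most 2
vertices leaves a connected graph. -/
def ThreeConnected {U : Type*} (G : SimpleGraph U) : Prop :=
  4 ≤ Nat.card U ∧ ∀ S : Set U, S.ncard ≤ 2 → (G.induce Sᶜ).Connected

/-!
Enclose every special point in its own large square, no two of the squares touching, and cut the
rest of a frame around the curves into cells so small that, by compactness, each of them sees only a
straight piece of a single curve. A large square sees only a star of segments from its special
point; hence each curve meets its boundary at most twice.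

The large squares are cells of a coarse mesh, and the small cells arise by dividing the remaining
cells of this mesh into `K × K` equal parts. All but finitely many axis-parallel lines meet the
curves in finitely many points, so the mesh can be moved such that, for every `K`, this holds for
all grid lines and the vertices are not on the curves. Then a straight piece of a curve meets each
edge at most once and the boundary of each cell at most twice.

Suppressing the four corners, the only vertices of degree two, leaves a 3-connected graph: the grid
is a union of fully divided rectangles, no two vertices separate such a rectangle without its
corners, and the rectangles can be joined one by one along at least three common vertices.
-/

/-! ### Linkage after the deletion of two vertices -/

section Linkage

variable {W : Type*} {H : SimpleGraph W} {A A' B : Set W} {u v w : W}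

/-- The vertices `u` and `v` lie in `A` and are joined by a walk of `H` that stays in `A`. -/
def ReachableIn (H : SimpleGraph W) (A : Set W) (u v : W) : Prop :=
  ∃ (hu : u ∈ A) (hv : v ∈ A), (H.induce A).Reachable ⟨u, hu⟩ ⟨v, hv⟩

theorem ReachableIn.refl (hu : u ∈ A) : ReachableIn H A u u :=
  ⟨hu, hu, .refl _⟩

theorem ReachableIn.symm (h : ReachableIn H A u v) : ReachableIn H A v u :=
  let ⟨hu, hv, huv⟩ := h
  ⟨hv, hu, huv.symm⟩

theorem ReachableIn.trans (h : ReachableIn H A u v) (h' : ReachableIn H A v w) :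
    ReachableIn H A u w :=
  let ⟨hu, _, huv⟩ := h
  let ⟨_, hw, hvw⟩ := h'
  ⟨hu, hw, huv.trans hvw⟩

theorem ReachableIn.mono (hA : A ⊆ A') (h : ReachableIn H A u v) : ReachableIn H A' u v :=
  let ⟨hu, hv, huv⟩ := h
  ⟨hA hu, hA hv, huv.map (SimpleGraph.induceHomOfLE H hA).toHom⟩

theorem ReachableIn.of_adj (hu : u ∈ A) (hv : v ∈ A) (h : H.Adj u v) : ReachableIn H A u v :=
  ⟨hu, hv, SimpleGraph.Adj.reachable (G := H.induce A) h⟩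

theorem ReachableIn.of_forall_adj {f : ℕ → W} {a b i j : ℕ} (hA : ∀ k ∈ Icc a b, f k ∈ A)
    (hadj : ∀ k, H.Adj (f k) (f (k + 1))) (hi : i ∈ Icc a b) (hj : j ∈ Icc a b) :
    ReachableIn H A (f i) (f j) := by
  have from_left : ∀ k ∈ Icc a b, ReachableIn H A (f a) (f k) := by
    rintro k ⟨hak, hkb⟩
    induction k, hak using Nat.le_induction with
    | base => exact .refl (hA a ⟨le_rfl, hkb⟩)
    | succ k hak ih =>
      exact (ih (by lia)).trans (.of_adj (hA k ⟨hak, by lia⟩) (hA _ ⟨by lia, hkb⟩) (hadj k))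
  exact (from_left i hi).symm.trans (from_left j hj)

/-- Within `A`, no two vertices separate the vertices of `B` from each other. -/
def ThreeLinked (H : SimpleGraph W) (A B : Set W) : Prop :=
  ∀ s t : W, ∀ u ∈ B \ {s, t}, ∀ v ∈ B \ {s, t}, ReachableIn H (A \ {s, t}) u v

theorem ThreeLinked.mono {B' : Set W} (h : ThreeLinked H A B) (hA : A ⊆ A') (hB : B' ⊆ B) :
    ThreeLinked H A' B' := fun s t u hu v hv =>
  (h s t u ⟨hB hu.1, hu.2⟩ v ⟨hB hv.1, hv.2⟩).mono (sdiff_subset_sdiff_left hA)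

theorem ThreeLinked.union_iUnion {ι : Type*} {C : ι → Set W} (hB : ThreeLinked H A B)
    (hC : ∀ i, ThreeLinked H A (C i)) (hBC : ∀ i s t, ((B ∩ C i) \ {s, t}).Nonempty) :
    ThreeLinked H A (B ∪ ⋃ i, C i) := by
  intro s t
  have to_base : ∀ u ∈ (B ∪ ⋃ i, C i) \ {s, t},
      ∃ w ∈ B \ {s, t}, ReachableIn H (A \ {s, t}) u w := by
    rintro u ⟨hu | hu, hst⟩
    · exact ⟨u, ⟨hu, hst⟩, hB s t u ⟨hu, hst⟩ u ⟨hu, hst⟩⟩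
    · obtain ⟨i, hi⟩ := mem_iUnion.1 hu
      obtain ⟨w, ⟨hwB, hwC⟩, hw⟩ := hBC i s t
      exact ⟨w, ⟨hwB, hw⟩, hC i s t u ⟨hi, hst⟩ w ⟨hwC, hw⟩⟩
  intro u hu v hv
  obtain ⟨u', hu', huu'⟩ := to_base u hu
  obtain ⟨v', hv', hvv'⟩ := to_base v hv
  exact huu'.trans ((hB s t u' hu' v' hv').trans hvv'.symm)

theorem ThreeLinked.induce (h : ThreeLinked H A B) :
    ThreeLinked (H.induce A) univ (Subtype.val ⁻¹' B) := by
  rintro s t u ⟨hu, hust⟩ v ⟨hv, hvst⟩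
  let f : H.induce (A \ {(s : W), (t : W)}) →g (H.induce A).induce (univ \ {s, t}) :=
    { toFun := fun w => ⟨⟨w, w.2.1⟩, trivial, by simpa [Subtype.ext_iff] using w.2.2⟩
      map_rel' := id }
  obtain ⟨_, _, huv⟩ := h s t u ⟨hu, by simpa [Subtype.ext_iff] using hust⟩ v
    ⟨hv, by simpa [Subtype.ext_iff] using hvst⟩
  exact ⟨⟨trivial, hust⟩, ⟨trivial, hvst⟩, huv.map f⟩

theorem sdiff_pair_nonempty_of_injective {f : ℕ → W} (hf : Function.Injective f) {k : ℕ}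
    (h : ∀ i ∈ Icc k (k + 2), f i ∈ A) (s t : W) : (A \ {s, t}).Nonempty := by
  by_contra hst
  have covered : ∀ i ∈ Icc k (k + 2), f i = s ∨ f i = t := fun i hi => by
    by_contra hne
    exact hst ⟨f i, h i hi, by simpa using hne⟩
  have h₀ := covered k (by simp)
  have h₁ := covered (k + 1) (by simp)
  have h₂ := covered (k + 2) (by simp)
  have h₀₁ : f k ≠ f (k + 1) := hf.ne (by simp)
  have h₀₂ : f k ≠ f (k + 2) := hf.ne (by simp)
  have h₁₂ : f (k + 1) ≠ f (k + 2) := hf.ne (by simp)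
  grind

end Linkage

/-! ### Suppressing vertices of degree two -/

section Suppress

variable {W : Type*} {H : SimpleGraph W} {D : Set W}

/-- The graph obtained from `H` by suppressing the vertices of `D`: two remaining vertices are
adjacent if they are adjacent in `H` or have a common neighbour in `D`. -/
def suppress (H : SimpleGraph W) (D : Set W) : SimpleGraph {w // w ∉ D} where
  Adj u v := u ≠ v ∧ (H.Adj u v ∨ ∃ c ∈ D, H.Adj u c ∧ H.Adj c v)
  symm := ⟨fun _ _ ⟨hne, h⟩ =>
    ⟨hne.symm, h.imp .symm fun ⟨c, hc, hu, hv⟩ => ⟨c, hc, hv.symm, hu.symm⟩⟩⟩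
  loopless := ⟨fun _ h => h.1 rfl⟩

/-- The set `D` consists of pairwise nonadjacent vertices of degree two, each with nonadjacent
neighbours and no two with the same neighbours, so that suppressing `D` creates no parallel
edges. -/
structure Suppressible (H : SimpleGraph W) (D : Set W) : Prop where
  neighborSet_eq : ∀ c ∈ D, ∃ u ∉ D, ∃ v ∉ D, u ≠ v ∧ ¬ H.Adj u v ∧ H.neighborSet c = {u, v}
  injOn : InjOn H.neighborSet D

namespace Suppressible

variable {c u v : W}

theorem notMem_of_adj (hD : Suppressible H D) (hc : c ∈ D) (hcu : H.Adj c u) : u ∉ D := by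
  obtain ⟨x, hx, y, hy, -, -, hN⟩ := hD.neighborSet_eq c hc
  obtain rfl | rfl : u = x ∨ u = y := by simpa [hN] using (H.mem_neighborSet c u).2 hcu
  exacts [hx, hy]

theorem neighborSet_eq_pair (hD : Suppressible H D) (hc : c ∈ D) (huv : u ≠ v) (hcu : H.Adj c u)
    (hcv : H.Adj c v) : H.neighborSet c = {u, v} := by
  obtain ⟨x, -, y, -, -, -, hN⟩ := hD.neighborSet_eq c hc
  have hu : u = x ∨ u = y := by simpa [hN] using (H.mem_neighborSet c u).2 hcu
  have hv : v = x ∨ v = y := by simpa [hN] using (H.mem_neighborSet c v).2 hcv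
  grind

theorem not_adj_of_adj_of_adj (hD : Suppressible H D) (hc : c ∈ D) (hcu : H.Adj c u)
    (hcv : H.Adj c v) : ¬ H.Adj u v := by
  intro huv
  obtain ⟨x, -, y, -, -, hxy, hN⟩ := hD.neighborSet_eq c hc
  obtain ⟨rfl, rfl⟩ | ⟨rfl, rfl⟩ := pair_eq_pair_iff.1
    ((hD.neighborSet_eq_pair hc huv.ne hcu hcv).symm.trans hN)
  exacts [hxy huv, hxy huv.symm]

theorem exists_adj_ne (hD : Suppressible H D) (hc : c ∈ D) (u : W) : ∃ v, v ≠ u ∧ H.Adj c v := by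
  obtain ⟨x, -, y, -, hxy, -, hN⟩ := hD.neighborSet_eq c hc
  have hx : H.Adj c x := by simp [← H.mem_neighborSet, hN]
  have hy : H.Adj c y := by simp [← H.mem_neighborSet, hN]
  by_cases h : x = u
  exacts [⟨y, fun h' => hxy (h.trans h'.symm), hy⟩, ⟨x, h, hx⟩]

end Suppressible

variable {u v : {w // w ∉ D}}

open Classical in
/-- The path of `H` that an edge of `suppress H D` stands for: a single edge, or two edges through
a vertex of `D`. -/
noncomputable def suppressWalk (h : (suppress H D).Adj u v) : H.Walk u v :=
  if huv : H.Adj u v then .cons huv .nil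
  else
    have hc := (h.2.resolve_left huv).choose_spec.2
    .cons hc.1 (.cons hc.2 .nil)

theorem suppressWalk_eq_cases (h : (suppress H D).Adj u v) :
    (∃ huv : H.Adj u v, suppressWalk h = .cons huv .nil) ∨
      ¬ H.Adj u v ∧ ∃ c ∈ D, ∃ (hu : H.Adj u c) (hv : H.Adj c v),
        suppressWalk h = .cons hu (.cons hv .nil) := by
  by_cases huv : H.Adj u v
  · exact .inl ⟨huv, dif_pos huv⟩
  · exact .inr ⟨huv, _, (h.2.resolve_left huv).choose_spec.1, _, _, dif_neg huv⟩

theorem suppressWalk_isPath (h : (suppress H D).Adj u v) : (suppressWalk h).IsPath := by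
  have huv : (u : W) ≠ v := Subtype.coe_ne_coe.2 h.1
  rw [SimpleGraph.Walk.isPath_def]
  obtain ⟨_, hw⟩ | ⟨-, c, -, hu, hv, hw⟩ := suppressWalk_eq_cases h
  · simp [hw, huv]
  · simp [hw, huv, hu.ne, hv.ne]

theorem mem_support_suppressWalk {h : (suppress H D).Adj u v} {w : W}
    (hw : w ∈ (suppressWalk h).support) : w = u ∨ w = v ∨ w ∈ D ∧ H.Adj w u ∧ H.Adj w v := by
  obtain ⟨_, hw'⟩ | ⟨-, c, hc, hu, hv, hw'⟩ := suppressWalk_eq_cases h <;>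
    simp only [hw', SimpleGraph.Walk.support_cons, SimpleGraph.Walk.support_nil, List.mem_cons,
      List.not_mem_nil, or_false] at hw
  · exact hw.imp_right .inl
  · obtain rfl | rfl | rfl := hw
    exacts [.inl rfl, .inr (.inr ⟨hc, hu.symm, hv⟩), .inr (.inl rfl)]

namespace Suppressible

theorem sym2_eq_of_mem_support (hD : Suppressible H D) {u' v' : {w // w ∉ D}} {w : W}
    {h : (suppress H D).Adj u v} {h' : (suppress H D).Adj u' v'} (hwD : w ∈ D)
    (hw : w ∈ (suppressWalk h).support) (hw' : w ∈ (suppressWalk h').support) :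
    s(u, v) = s(u', v') := by
  have pair : ∀ {u v : {w // w ∉ D}} {h : (suppress H D).Adj u v},
      w ∈ (suppressWalk h).support → H.neighborSet w = {(u : W), (v : W)} := by
    intro u v h hw
    obtain rfl | rfl | ⟨-, hu, hv⟩ := mem_support_suppressWalk hw
    exacts [(u.2 hwD).elim, (v.2 hwD).elim,
      hD.neighborSet_eq_pair hwD (Subtype.coe_ne_coe.2 h.1) hu hv]
  have := (pair hw).symm.trans (pair hw')
  simpa [pair_eq_pair_iff, Subtype.ext_iff] using this

theorem exists_mem_edges_of_mem (hD : Suppressible H D) {c x : W} (hc : c ∈ D) (hcx : H.Adj c x) :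
    ∃ (u v : _) (h : (suppress H D).Adj u v), s(c, x) ∈ (suppressWalk h).edges := by
  obtain ⟨y, hyx, hcy⟩ := hD.exists_adj_ne hc x
  have h : (suppress H D).Adj ⟨x, hD.notMem_of_adj hc hcx⟩ ⟨y, hD.notMem_of_adj hc hcy⟩ :=
    ⟨fun e => hyx (congrArg Subtype.val e).symm, .inr ⟨c, hc, hcx.symm, hcy⟩⟩
  refine ⟨_, _, h, ?_⟩
  obtain ⟨hxy, -⟩ | ⟨-, c', hc', hu, hv, hw⟩ := suppressWalk_eq_cases h
  · exact (hD.not_adj_of_adj_of_adj hc hcx hcy hxy).elim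
  · obtain rfl : c' = c := hD.injOn hc' hc <|
      (hD.neighborSet_eq_pair hc' hyx.symm hu.symm hv).trans
        (hD.neighborSet_eq_pair hc hyx.symm hcx hcy).symm
    simp [hw, Sym2.eq_swap]

theorem exists_mem_edges (hD : Suppressible H D) {x y : W} (hxy : H.Adj x y) :
    ∃ (u v : _) (h : (suppress H D).Adj u v), s(x, y) ∈ (suppressWalk h).edges := by
  by_cases hx : x ∈ D
  · exact hD.exists_mem_edges_of_mem hx hxy
  by_cases hy : y ∈ D
  · exact Sym2.eq_swap (a := x) ▸ hD.exists_mem_edges_of_mem hy hxy.symm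
  have h : (suppress H D).Adj ⟨x, hx⟩ ⟨y, hy⟩ :=
    ⟨fun e => hxy.ne (congrArg Subtype.val e), .inl hxy⟩
  refine ⟨_, _, h, ?_⟩
  obtain ⟨_, hw⟩ | ⟨hxy', -⟩ := suppressWalk_eq_cases h
  · simp [hw]
  · exact (hxy' hxy).elim

theorem isSubdivisionOf (hD : Suppressible H D) : IsSubdivisionOf H (suppress H D) := by
  have mem_range : ∀ {w}, w ∉ D → w ∈ range (Function.Embedding.subtype (· ∉ D)) :=
    fun hw => ⟨⟨_, hw⟩, rfl⟩
  refine ⟨.subtype (· ∉ D), fun u v h => suppressWalk h, fun u v h => suppressWalk_isPath h,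
    ?_, ?_, ?_, ?_⟩
  · rintro u v h _ hw ⟨w, rfl⟩
    obtain hu | hv | ⟨hwD, -⟩ := mem_support_suppressWalk hw
    exacts [.inl hu, .inr hv, (w.2 hwD).elim]
  · intro u v h u' v' h' hne w hw hw'
    exact mem_range fun hwD => hne (hD.sym2_eq_of_mem_support hwD hw hw')
  · rintro ⟨x, y⟩ hxy
    exact hD.exists_mem_edges hxy
  · intro w
    by_cases hw : w ∈ D
    · obtain ⟨x, -, hx⟩ := hD.exists_adj_ne hw w
      obtain ⟨u, v, h, he⟩ := hD.exists_mem_edges hx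
      exact .inr ⟨u, v, h, SimpleGraph.Walk.fst_mem_support_of_mem_edges _ he⟩
    · exact .inl (mem_range hw)

end Suppressible

/-- A walk of `H` between remaining vertices induces one of `suppress H D`: whenever it visits a
vertex of `D`, its predecessor and its successor are equal or adjacent after suppression. -/
theorem ReachableIn.suppress (hD : ∀ c ∈ D, ∀ w, H.Adj c w → w ∉ D) {A : Set W}
    (h : ReachableIn H A u v) : ReachableIn (suppress H D) (Subtype.val ⁻¹' A) u v := by
  obtain ⟨hu, hv, ⟨p⟩⟩ := h
  suffices key : ∀ {x : A} (_ : (H.induce A).Walk x ⟨v, hv⟩) (y : {w // w ∉ D}), (y : W) ∈ A →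
      ((y : W) = x ∨ (x : W) ∈ D ∧ H.Adj x y) →
        ReachableIn (_root_.suppress H D) (Subtype.val ⁻¹' A) y v from key p u hu (.inl rfl)
  intro x p
  generalize hz : (⟨v, hv⟩ : A) = z at p
  induction p with
  | nil =>
    subst hz
    rintro y hy (h | ⟨hvD, -⟩)
    exacts [Subtype.ext h ▸ .refl hy, (v.2 hvD).elim]
  | @cons x x' _ hxx' _ ih =>
    replace hxx' : H.Adj x x' := hxx'
    rintro y hy (hyx | ⟨hxD, hxy⟩)
    · by_cases hx'D : (x' : W) ∈ D
      · exact ih hz y hy (.inr ⟨hx'D, hyx ▸ hxx'.symm⟩)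
      · refine .trans (.of_adj hy (v := ⟨x', hx'D⟩) x'.2 ⟨?_, .inl (hyx ▸ hxx')⟩)
          (ih hz ⟨x', hx'D⟩ x'.2 (.inl rfl))
        exact fun e => hxx'.ne (hyx.symm.trans (congrArg Subtype.val e))
    · have hx'D := hD x hxD x' hxx'
      have h' := ih hz ⟨x', hx'D⟩ x'.2 (.inl rfl)
      by_cases e : y = ⟨x', hx'D⟩
      · exact e ▸ h'
      · exact .trans (.of_adj hy x'.2 ⟨e, .inr ⟨x, hxD, hxy.symm, hxx'⟩⟩) h'

theorem threeConnected_suppress [Finite W] (hD : ∀ c ∈ D, ∀ w, H.Adj c w → w ∉ D)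
    (hcard : 4 ≤ Nat.card {w // w ∉ D}) (hH : ThreeLinked H univ Dᶜ) :
    ThreeConnected (suppress H D) := by
  refine ⟨hcard, fun S hS => ?_⟩
  rw [SimpleGraph.connected_iff]
  constructor
  · rintro ⟨u, hu⟩ ⟨v, hv⟩
    have hpair : ({u, v} : Set {w // w ∉ D}).ncard ≤ 2 := ncard_insert_le u {v} |>.trans (by simp)
    have hcompl := ncard_add_ncard_compl ({u, v} : Set {w // w ∉ D})
    obtain ⟨T, hST, hT, hTcard⟩ := exists_subsuperset_card_eq
      (s := S) (t := {u, v}ᶜ) (by grind) hS (by lia)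
    obtain ⟨s, t, -, rfl⟩ := ncard_eq_two.1 hTcard
    have hsu : (u : W) ∉ ({(s : W), (t : W)} : Set W) := by grind
    have hsv : (v : W) ∉ ({(s : W), (t : W)} : Set W) := by grind
    have huv := (hH s t u ⟨u.2, hsu⟩ v ⟨v.2, hsv⟩).suppress hD
    have hsub : Subtype.val ⁻¹' (univ \ {(s : W), (t : W)}) ⊆ Sᶜ := by grind
    obtain ⟨_, _, h⟩ := huv.mono hsub
    exact h
  · by_contra hempty
    have hcompl := ncard_add_ncard_compl S
    rw [not_nonempty_iff, isEmpty_coe_sort] at hempty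
    rw [hempty, ncard_empty] at hcompl
    lia

end Suppress

section Iso

variable {U U' W W' : Type*} {G : SimpleGraph U} {G' : SimpleGraph U'} {H : SimpleGraph W}
  {H' : SimpleGraph W'}

theorem ThreeConnected.of_iso (hG : ThreeConnected G) (f : G ≃g G') : ThreeConnected G' := by
  refine ⟨(Nat.card_congr f.toEquiv) ▸ hG.1, fun S hS => ?_⟩
  have hS' : (f ⁻¹' S).ncard ≤ 2 := by
    rwa [ncard_preimage_of_injective_subset_range f.injective (by simp [f.surjective.range_eq])]
  have hmaps : MapsTo f.toHom (f ⁻¹' S)ᶜ Sᶜ := fun u hu => hu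
  refine (hG.2 _ hS').map (SimpleGraph.induceHom f.toHom hmaps) fun ⟨v, hv⟩ => ?_
  obtain ⟨u, rfl⟩ := f.surjective v
  exact ⟨⟨u, hv⟩, rfl⟩

theorem IsSubdivisionOf.of_iso (h : IsSubdivisionOf H G) (e : H ≃g H') (f : G ≃g G') :
    IsSubdivisionOf H' G' := by
  obtain ⟨φ, P, hpath, hends, hdisj, hedge, hcover⟩ := h
  have mem_range : ∀ {w}, w ∈ range φ → e w ∈ range fun u => e (φ (f.symm u)) := by
    rintro _ ⟨u, rfl⟩
    exact ⟨f u, by simp⟩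
  have exists_adj : ∀ {p : ∀ x y, H.Walk x y → Prop},
      (∃ (u v : U) (h : G.Adj u v), p _ _ (P h)) →
        ∃ (u v : U') (h : G.Adj (f.symm u) (f.symm v)), p _ _ (P h) := by
    rintro p ⟨u, v, h, hp⟩
    obtain ⟨u, rfl⟩ := f.symm.surjective u
    obtain ⟨v, rfl⟩ := f.symm.surjective v
    exact ⟨u, v, h, hp⟩
  refine ⟨(f.symm.toEquiv.toEmbedding.trans φ).trans e.toEquiv.toEmbedding,
    fun u v h => (P (f.symm.map_adj_iff.2 h)).map e.toHom, ?_, ?_, ?_, ?_, ?_⟩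
  · intro u v h
    exact (hpath _).map e.injective
  · rintro u v h w hw ⟨x, rfl⟩
    obtain ⟨w, hw, hwx⟩ := List.mem_map.1 (SimpleGraph.Walk.support_map e.toHom _ ▸ hw)
    obtain rfl : w = φ (f.symm x) := e.injective hwx
    exact (hends _ _ hw ⟨_, rfl⟩).imp (congrArg e) (congrArg e)
  · intro u v h u' v' h' hne w hw hw'
    obtain ⟨x, hx, rfl⟩ := List.mem_map.1 (SimpleGraph.Walk.support_map e.toHom _ ▸ hw)
    obtain ⟨y, hy, hyx⟩ := List.mem_map.1 (SimpleGraph.Walk.support_map e.toHom _ ▸ hw')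
    obtain rfl : y = x := e.injective hyx
    refine mem_range (hdisj _ _ (fun hs => hne ?_) y hx hy)
    simpa using congrArg (Sym2.map f) hs
  · rintro ⟨x, y⟩ hxy
    obtain ⟨x, rfl⟩ := e.surjective x
    obtain ⟨y, rfl⟩ := e.surjective y
    obtain ⟨u, v, h, he⟩ :=
      exists_adj (p := fun _ _ p => s(x, y) ∈ p.edges) (hedge _ (e.map_adj_iff.1 hxy))
    exact ⟨u, v, f.symm.map_adj_iff.1 h,
      SimpleGraph.Walk.edges_map e.toHom _ ▸ List.mem_map_of_mem (f := Sym2.map e) he⟩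
  · intro w
    obtain ⟨w, rfl⟩ := e.surjective w
    refine (hcover w).imp mem_range fun h => ?_
    obtain ⟨u, v, h, hw⟩ := exists_adj (p := fun _ _ p => w ∈ p.support) h
    exact ⟨u, v, f.symm.map_adj_iff.1 h,
      SimpleGraph.Walk.support_map e.toHom _ ▸ List.mem_map_of_mem (f := e) hw⟩

end Iso

/-! ### Rectangles of the square lattice -/

section Lattice

open SimpleGraph

theorem hasse_adj_mk_succ_left (i j : ℕ) : (hasse (ℕ × ℕ)).Adj (i, j) (i + 1, j) := by
  simp

theorem hasse_adj_mk_succ_right (i j : ℕ) : (hasse (ℕ × ℕ)).Adj (i, j) (i, j + 1) := by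
  simp

/-- The vertices of a rectangle of the square lattice, without the four corners. -/
def truncatedRectangle (a a' b b' : ℕ) : Set (ℕ × ℕ) :=
  Icc a a' ×ˢ Icc b b' \ {a, a'} ×ˢ {b, b'}

variable {a a' b b' : ℕ} {s t : ℕ × ℕ} {i i' j j' : ℕ}

theorem reachableIn_row (hj : j ∈ Icc b b') (hs : s.2 ≠ j) (ht : t.2 ≠ j) (hi : i ∈ Icc a a')
    (hi' : i' ∈ Icc a a') :
    ReachableIn (hasse (ℕ × ℕ)) (Icc a a' ×ˢ Icc b b' \ {s, t}) (i, j) (i', j) :=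
  .of_forall_adj (f := fun k => (k, j)) (a := a) (b := a') (by grind)
    (fun k => hasse_adj_mk_succ_left k j) hi hi'

theorem reachableIn_column (hi : i ∈ Icc a a') (hs : s.1 ≠ i) (ht : t.1 ≠ i) (hj : j ∈ Icc b b')
    (hj' : j' ∈ Icc b b') :
    ReachableIn (hasse (ℕ × ℕ)) (Icc a a' ×ˢ Icc b b' \ {s, t}) (i, j) (i, j') :=
  .of_forall_adj (f := fun k => (i, k)) (a := b) (b := b') (by grind)
    (fun k => hasse_adj_mk_succ_right i k) hj hj'

/-- A non-corner point has both its horizontal or both its vertical neighbours in the rectangle.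
If neither its row nor its column is free of `s` and `t`, then one of these two neighbours lies in
a free column, respectively row. -/
theorem exists_reachableIn_free_line {p : ℕ × ℕ}
    (hp : p ∈ truncatedRectangle a a' b b' \ {s, t}) :
    ∃ q ∈ Icc a a' ×ˢ Icc b b',
      ReachableIn (hasse (ℕ × ℕ)) (Icc a a' ×ˢ Icc b b' \ {s, t}) p q ∧
        (s.1 ≠ q.1 ∧ t.1 ≠ q.1 ∨ s.2 ≠ q.2 ∧ t.2 ≠ q.2) := by
  obtain ⟨i, j⟩ := p
  have hmem : (i, j) ∈ Icc a a' ×ˢ Icc b b' \ {s, t} := ⟨hp.1.1, hp.2⟩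
  have step : ∀ q ∈ Icc a a' ×ˢ Icc b b', q ∉ ({s, t} : Set (ℕ × ℕ)) →
      ((hasse (ℕ × ℕ)).Adj (i, j) q ∨ (hasse (ℕ × ℕ)).Adj q (i, j)) →
      ReachableIn (hasse (ℕ × ℕ)) (Icc a a' ×ˢ Icc b b' \ {s, t}) (i, j) q :=
    fun q hq hq' hadj => .of_adj hmem ⟨hq, hq'⟩ (hadj.elim id SimpleGraph.Adj.symm)
  by_cases hfree : s.1 ≠ i ∧ t.1 ≠ i ∨ s.2 ≠ j ∧ t.2 ≠ j
  · exact ⟨_, hmem.1, .refl hmem, hfree⟩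
  have inner : a < i ∧ i < a' ∨ b < j ∧ j < b' := by grind [truncatedRectangle]
  obtain ⟨hi, hi'⟩ | ⟨hj, hj'⟩ := inner
  · by_cases hright : s.1 ≠ i + 1 ∧ t.1 ≠ i + 1
    · exact ⟨(i + 1, j), by grind, step _ (by grind) (by grind) (by simp), .inl hright⟩
    · obtain ⟨i, rfl⟩ := Nat.exists_eq_add_one.2 (Nat.zero_lt_of_lt hi)
      exact ⟨(i, j), by grind, step _ (by grind) (by grind) (by simp), .inl (by grind)⟩
  · by_cases hup : s.2 ≠ j + 1 ∧ t.2 ≠ j + 1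
    · exact ⟨(i, j + 1), by grind, step _ (by grind) (by grind) (by simp), .inr hup⟩
    · obtain ⟨j, rfl⟩ := Nat.exists_eq_add_one.2 (Nat.zero_lt_of_lt hj)
      exact ⟨(i, j), by grind, step _ (by grind) (by grind) (by simp), .inr (by grind)⟩

theorem threeLinked_truncatedRectangle (ha : a + 2 ≤ a') (hb : b + 2 ≤ b') :
    ThreeLinked (hasse (ℕ × ℕ)) (Icc a a' ×ˢ Icc b b') (truncatedRectangle a a' b b') := by
  intro s t
  obtain ⟨i₀, hi₀, hsi₀, hti₀⟩ : ∃ i ∈ Icc a a', s.1 ≠ i ∧ t.1 ≠ i := by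
    obtain ⟨i, hi, hst⟩ := sdiff_pair_nonempty_of_injective (A := Icc a a') Function.injective_id
      (k := a) (by grind) s.1 t.1
    exact ⟨i, hi, by grind⟩
  obtain ⟨j₀, hj₀, hsj₀, htj₀⟩ : ∃ j ∈ Icc b b', s.2 ≠ j ∧ t.2 ≠ j := by
    obtain ⟨j, hj, hst⟩ := sdiff_pair_nonempty_of_injective (A := Icc b b') Function.injective_id
      (k := b) (by grind) s.2 t.2
    exact ⟨j, hj, by grind⟩
  have to_crossing : ∀ p ∈ truncatedRectangle a a' b b' \ {s, t},
      ReachableIn (hasse (ℕ × ℕ)) (Icc a a' ×ˢ Icc b b' \ {s, t}) p (i₀, j₀) := by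
    intro p hp
    obtain ⟨⟨i, j⟩, ⟨hi, hj⟩, hpq, ⟨hs, ht⟩ | ⟨hs, ht⟩⟩ := exists_reachableIn_free_line hp
    · exact hpq.trans ((reachableIn_column hi hs ht hj hj₀).trans
        (reachableIn_row hj₀ hsj₀ htj₀ hi hi₀))
    · exact hpq.trans ((reachableIn_row hj hs ht hi hi₀).trans
        (reachableIn_column hi₀ hsi₀ hti₀ hj hj₀))
  exact fun u hu v hv => (to_crossing u hu).trans (to_crossing v hv).symm

end Lattice

/-! ### Lattice patterns with undivided blocks -/

/-- An `n × n` array of coarse cells, each divided into `K × K` fine cells except for the *blocks*,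
which are left undivided. A coarse cell is named by its coarse column and row. The blocks avoid
the border of the array, and neither the columns nor the rows of two blocks are consecutive. -/
structure BlockPattern where
  n : ℕ
  K : ℕ
  blocks : Set (ℕ × ℕ)
  two_le_n : 2 ≤ n
  four_le_K : 4 ≤ K
  fst_bounds : ∀ p ∈ blocks, 1 ≤ p.1 ∧ p.1 + 2 ≤ n
  snd_bounds : ∀ p ∈ blocks, 1 ≤ p.2 ∧ p.2 + 2 ≤ n
  fst_ne_succ : ∀ p ∈ blocks, ∀ q ∈ blocks, q.1 ≠ p.1 + 1
  snd_ne_succ : ∀ p ∈ blocks, ∀ q ∈ blocks, q.2 ≠ p.2 + 1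

namespace BlockPattern

open SimpleGraph

variable (P : BlockPattern) {a b i j i₁ i₂ j₁ j₂ : ℕ}

/-- The number of fine columns, which is also the number of fine rows. -/
def N : ℕ := P.n * P.K

/-- The lattice points of the pattern: those of the array not strictly inside a block. -/
def points : Set (ℕ × ℕ) :=
  Icc 0 P.N ×ˢ Icc 0 P.N \
    ⋃ p ∈ P.blocks, Ioo (p.1 * P.K) ((p.1 + 1) * P.K) ×ˢ Ioo (p.2 * P.K) ((p.2 + 1) * P.K)

/-- The four corners of the array. -/
def corners : Set (ℕ × ℕ) := {0, P.N} ×ˢ {0, P.N}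

/-- The fine cell with lower left corner `(i, j)` is part of the array and of no block. -/
def IsFine (i j : ℕ) : Prop :=
  i < P.N ∧ j < P.N ∧ ∀ p ∈ P.blocks,
    ¬ (i ∈ Ico (p.1 * P.K) ((p.1 + 1) * P.K) ∧ j ∈ Ico (p.2 * P.K) ((p.2 + 1) * P.K))

/-- The rectangle with lower left corner `(i₁, j₁)` and upper right corner `(i₂, j₂)` is a fine
cell outside the blocks, or a block. -/
def IsCell (i₁ i₂ j₁ j₂ : ℕ) : Prop :=
  (P.IsFine i₁ j₁ ∧ i₂ = i₁ + 1 ∧ j₂ = j₁ + 1) ∨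
    ∃ p ∈ P.blocks, i₁ = p.1 * P.K ∧ i₂ = (p.1 + 1) * P.K ∧ j₁ = p.2 * P.K ∧ j₂ = (p.2 + 1) * P.K

variable {P}

theorem succ_mul_K_le_N (ha : a < P.n) : (a + 1) * P.K ≤ P.N :=
  Nat.mul_le_mul_right _ ha

theorem eight_le_N : 8 ≤ P.N :=
  Nat.mul_le_mul P.two_le_n P.four_le_K

theorem eq_of_mem_Icc_of_mem_Ioo (h : i ∈ Icc (a * P.K) ((a + 1) * P.K))
    (h' : i ∈ Ioo (b * P.K) ((b + 1) * P.K)) : a = b := by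
  have hab := Nat.lt_of_mul_lt_mul_right (h.1.trans_lt h'.2)
  have hba := Nat.lt_of_mul_lt_mul_right (h'.1.trans_le h.2)
  lia

theorem exists_mem_Ico (hi : i < P.N) : ∃ a < P.n, i ∈ Ico (a * P.K) ((a + 1) * P.K) := by
  have hK : 0 < P.K := by have := P.four_le_K; lia
  refine ⟨i / P.K, (Nat.div_lt_iff_lt_mul hK).2 hi, Nat.div_mul_le_self _ _, ?_⟩
  rw [add_mul, one_mul]
  exact Nat.lt_div_mul_add hK

theorem exists_eq_mul_or_mem_Ioo (hi : i ≤ P.N) :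
    (∃ a ≤ P.n, i = a * P.K) ∨ ∃ a < P.n, i ∈ Ioo (a * P.K) ((a + 1) * P.K) := by
  obtain rfl | hlt := hi.eq_or_lt
  · exact .inl ⟨P.n, le_rfl, rfl⟩
  obtain ⟨a, ha, hai, hia⟩ := exists_mem_Ico hlt
  obtain rfl | hai := hai.eq_or_lt
  exacts [.inl ⟨a, ha.le, rfl⟩, .inr ⟨a, ha, hai, hia⟩]

theorem mem_points : (i, j) ∈ P.points ↔ (i ≤ P.N ∧ j ≤ P.N) ∧ ∀ p ∈ P.blocks,
    ¬ (i ∈ Ioo (p.1 * P.K) ((p.1 + 1) * P.K) ∧ j ∈ Ioo (p.2 * P.K) ((p.2 + 1) * P.K)) := by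
  simp only [points, mem_sdiff, mem_prod, mem_Icc, zero_le, true_and, mem_iUnion, exists_prop,
    not_exists, not_and]

theorem mem_points_of_fst_eq_zero_or_N (hi : i = 0 ∨ i = P.N) (hj : j ≤ P.N) :
    (i, j) ∈ P.points := by
  refine mem_points.2 ⟨⟨by grind, hj⟩, fun p hp ⟨_, _⟩ => ?_⟩
  have hlt := succ_mul_K_le_N (P := P) (a := p.1) (by have := P.fst_bounds p hp; lia)
  grind

theorem mem_points_of_snd_eq_zero_or_N (hi : i ≤ P.N) (hj : j = 0 ∨ j = P.N) :
    (i, j) ∈ P.points := by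
  refine mem_points.2 ⟨⟨hi, by grind⟩, fun p hp ⟨_, _⟩ => ?_⟩
  have hlt := succ_mul_K_le_N (P := P) (a := p.2) (by have := P.snd_bounds p hp; lia)
  grind

/-! ### Cells of a pattern -/

theorem IsCell.bounds (h : P.IsCell i₁ i₂ j₁ j₂) : i₁ < i₂ ∧ i₂ ≤ P.N ∧ j₁ < j₂ ∧ j₂ ≤ P.N := by
  obtain ⟨⟨hi, hj, -⟩, rfl, rfl⟩ | ⟨p, hp, rfl, rfl, rfl, rfl⟩ := h
  · lia
  · have hK := P.four_le_K
    have h₁ := succ_mul_K_le_N (P := P) (a := p.1) (by have := P.fst_bounds p hp; lia)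
    have h₂ := succ_mul_K_le_N (P := P) (a := p.2) (by have := P.snd_bounds p hp; lia)
    grind

theorem IsCell.boundary_subset_points (h : P.IsCell i₁ i₂ j₁ j₂) :
    Icc i₁ i₂ ×ˢ Icc j₁ j₂ \ Ioo i₁ i₂ ×ˢ Ioo j₁ j₂ ⊆ P.points := by
  rintro ⟨i, j⟩ ⟨⟨hi, hj⟩, hij⟩
  obtain ⟨-, hi₂, -, hj₂⟩ := h.bounds
  refine mem_points.2 ⟨⟨hi.2.trans hi₂, hj.2.trans hj₂⟩, fun p hp ⟨hi', hj'⟩ => ?_⟩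
  obtain ⟨⟨-, -, hfine⟩, rfl, rfl⟩ | ⟨q, -, rfl, rfl, rfl, rfl⟩ := h
  · specialize hfine p hp
    grind
  · have h₁ := eq_of_mem_Icc_of_mem_Ioo hi hi'
    have h₂ := eq_of_mem_Icc_of_mem_Ioo hj hj'
    grind

theorem IsCell.notMem_points_left (h : P.IsCell i₁ i₂ j₁ j₂) (hi : i ∈ Ico i₁ i₂)
    (hj : j ∈ Ioo j₁ j₂) : (i, j) ∉ P.points ∨ (i + 1, j) ∉ P.points := by
  have hK := P.four_le_K
  obtain ⟨-, rfl, rfl⟩ | ⟨p, hp, rfl, rfl, rfl, rfl⟩ := h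
  · grind
  · by_contra! hmem
    have h₁ := (mem_points.1 hmem.1).2 p hp
    have h₂ := (mem_points.1 hmem.2).2 p hp
    grind

theorem IsCell.notMem_points_right (h : P.IsCell i₁ i₂ j₁ j₂) (hi : i ∈ Ioo i₁ i₂)
    (hj : j ∈ Ico j₁ j₂) : (i, j) ∉ P.points ∨ (i, j + 1) ∉ P.points := by
  have hK := P.four_le_K
  obtain ⟨-, rfl, rfl⟩ | ⟨p, hp, rfl, rfl, rfl, rfl⟩ := h
  · grind
  · by_contra! hmem
    have h₁ := (mem_points.1 hmem.1).2 p hp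
    have h₂ := (mem_points.1 hmem.2).2 p hp
    grind

theorem exists_isCell (hi : i < P.N) (hj : j < P.N) :
    ∃ i₁ i₂ j₁ j₂, P.IsCell i₁ i₂ j₁ j₂ ∧ i ∈ Ico i₁ i₂ ∧ j ∈ Ico j₁ j₂ := by
  by_cases h : P.IsFine i j
  · exact ⟨i, i + 1, j, j + 1, .inl ⟨h, rfl, rfl⟩, by simp, by simp⟩
  · simp only [IsFine, hi, hj, true_and, not_forall, not_not] at h
    obtain ⟨p, hp, hpi, hpj⟩ := h
    exact ⟨_, _, _, _, .inr ⟨p, hp, rfl, rfl, rfl, rfl⟩, hpi, hpj⟩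

theorem eq_bottom_of_mem_points {p : ℕ × ℕ} (hp : p ∈ P.blocks)
    (hi : i ∈ Ico (p.1 * P.K) ((p.1 + 1) * P.K)) (hj : j ∈ Ico (p.2 * P.K) ((p.2 + 1) * P.K))
    (h : (i, j) ∈ P.points) (h' : (i + 1, j) ∈ P.points) : j = p.2 * P.K := by
  have hK := P.four_le_K
  have h₁ := (mem_points.1 h).2 p hp
  have h₂ := (mem_points.1 h').2 p hp
  grind

theorem isFine_of_succ_eq_mul_K (hi : i < P.N) (hj : j + 1 = b * P.K) (hb : b ≤ P.n)
    (hblocks : ∀ q ∈ P.blocks, b ≠ q.2 + 1) : P.IsFine i j := by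
  have hN := Nat.mul_le_mul_right P.K hb
  refine ⟨hi, by simp only [N]; lia, fun q hq ⟨_, hqj⟩ => hblocks q hq ?_⟩
  have hle : b ≤ q.2 + 1 := Nat.le_of_mul_le_mul_right (hj.symm.trans_le hqj.2)
    (by have := P.four_le_K; lia)
  have hlt : q.2 < b := Nat.lt_of_mul_lt_mul_right (hqj.1.trans_lt (by lia))
  lia

/-- A block above the edge rules out a block below it, as the two would lie in consecutive rows. -/
theorem exists_isFine_of_mem_points_left (h : (i, j) ∈ P.points) (h' : (i + 1, j) ∈ P.points) :
    ∃ j', P.IsFine i j' ∧ (j = j' ∨ j = j' + 1) := by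
  have hi : i < P.N := (mem_points.1 h').1.1
  by_cases hfine : P.IsFine i j
  · exact ⟨j, hfine, .inl rfl⟩
  suffices ∃ b ≤ P.n, 0 < b ∧ j = b * P.K ∧ ∀ q ∈ P.blocks, b ≠ q.2 + 1 by
    obtain ⟨b, hbn, hb, rfl, hblocks⟩ := this
    have hpos := Nat.mul_pos hb (by have := P.four_le_K; lia : 0 < P.K)
    exact ⟨b * P.K - 1, isFine_of_succ_eq_mul_K hi (by lia) hbn hblocks, .inr (by lia)⟩
  obtain hj | rfl := (mem_points.1 h).1.2.lt_or_eq
  · simp only [IsFine, hi, hj, true_and, not_forall, not_not] at hfine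
    obtain ⟨p, hp, hpi, hpj⟩ := hfine
    have hbounds := P.snd_bounds p hp
    exact ⟨p.2, by lia, by lia, eq_bottom_of_mem_points hp hpi hpj h h',
      fun q hq => P.snd_ne_succ q hq p hp⟩
  · exact ⟨P.n, le_rfl, by have := P.two_le_n; lia, rfl, fun q hq => by
      have := P.snd_bounds q hq; lia⟩

variable (P) in
/-- The reflection of a pattern in the diagonal. -/
def transpose : BlockPattern where
  n := P.n
  K := P.K
  blocks := Prod.swap ⁻¹' P.blocks
  two_le_n := P.two_le_n
  four_le_K := P.four_le_K
  fst_bounds p hp := P.snd_bounds p.swap hp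
  snd_bounds p hp := P.fst_bounds p.swap hp
  fst_ne_succ p hp q hq := P.snd_ne_succ p.swap hp q.swap hq
  snd_ne_succ p hp q hq := P.fst_ne_succ p.swap hp q.swap hq

theorem mem_points_transpose : (j, i) ∈ P.transpose.points ↔ (i, j) ∈ P.points := by
  simp only [mem_points, transpose, N, mem_preimage, Prod.forall, Prod.swap_prod_mk]
  grind

theorem isFine_transpose : P.transpose.IsFine j i ↔ P.IsFine i j := by
  simp only [IsFine, transpose, N, mem_preimage, Prod.forall, Prod.swap_prod_mk]
  grind

theorem exists_isFine_of_mem_points_right (h : (i, j) ∈ P.points) (h' : (i, j + 1) ∈ P.points) :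
    ∃ i', P.IsFine i' j ∧ (i = i' ∨ i = i' + 1) := by
  simpa only [isFine_transpose] using exists_isFine_of_mem_points_left
    (mem_points_transpose.2 h) (mem_points_transpose.2 h')

/-! ### The graph of a pattern is a subdivision of a 3-connected graph -/

theorem column_subset_points (ha : a < P.n) (hfree : ∀ p ∈ P.blocks, p.1 ≠ a) :
    Icc (a * P.K) ((a + 1) * P.K) ×ˢ Icc 0 P.N ⊆ P.points := by
  rintro ⟨i, j⟩ ⟨hi, hj⟩
  refine mem_points.2 ⟨⟨hi.2.trans (succ_mul_K_le_N ha), hj.2⟩, fun p hp ⟨hi', _⟩ => ?_⟩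
  exact hfree p hp (eq_of_mem_Icc_of_mem_Ioo hi hi').symm

theorem row_subset_points (hb : b < P.n) (hfree : ∀ p ∈ P.blocks, p.2 ≠ b) :
    Icc 0 P.N ×ˢ Icc (b * P.K) ((b + 1) * P.K) ⊆ P.points := fun q hq =>
  mem_points_transpose.1 <| column_subset_points (P := P.transpose) hb
    (fun p hp => hfree p.swap hp) (show q.swap ∈ _ from hq.symm)

theorem coarseCell_subset_points (ha : a < P.n) (hb : b < P.n) (hfree : (a, b) ∉ P.blocks) :
    Icc (a * P.K) ((a + 1) * P.K) ×ˢ Icc (b * P.K) ((b + 1) * P.K) ⊆ P.points := by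
  rintro ⟨i, j⟩ ⟨hi, hj⟩
  refine mem_points.2 ⟨⟨hi.2.trans (succ_mul_K_le_N ha), hj.2.trans (succ_mul_K_le_N hb)⟩,
    fun p hp ⟨hi', hj'⟩ => hfree ?_⟩
  rwa [eq_of_mem_Icc_of_mem_Ioo hi hi', eq_of_mem_Icc_of_mem_Ioo hj hj']

theorem exists_free_column (ha : a ≤ P.n) :
    ∃ c < P.n, (∀ p ∈ P.blocks, p.1 ≠ c) ∧ (a = c ∨ a = c + 1) := by
  have := P.two_le_n
  by_cases h : a < P.n ∧ ∀ p ∈ P.blocks, p.1 ≠ a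
  · exact ⟨a, h.1, h.2, .inl rfl⟩
  · obtain rfl | ⟨hlt, p, hp, rfl⟩ : a = P.n ∨ a < P.n ∧ ∃ p ∈ P.blocks, p.1 = a := by grind
    · exact ⟨P.n - 1, by lia, fun p hp => by have := P.fst_bounds p hp; lia, .inr (by lia)⟩
    · have := P.fst_bounds p hp
      exact ⟨p.1 - 1, by lia, fun q hq => by have := P.fst_ne_succ q hq p hp; lia, .inr (by lia)⟩

theorem exists_free_row (hb : b ≤ P.n) :
    ∃ c < P.n, (∀ p ∈ P.blocks, p.2 ≠ c) ∧ (b = c ∨ b = c + 1) := by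
  obtain ⟨c, hc, hfree, hbc⟩ := exists_free_column (P := P.transpose) hb
  exact ⟨c, hc, fun p hp => hfree p.swap hp, hbc⟩

variable (P) in
/-- The bottom row and all columns and rows without blocks, each without its corners. It contains
all lattice points on coarse lines except the corners of the array. -/
def skeleton : Set (ℕ × ℕ) :=
  (truncatedRectangle 0 P.N 0 P.K ∪
    ⋃ a : {a // a < P.n ∧ ∀ p ∈ P.blocks, p.1 ≠ a},
      truncatedRectangle (a * P.K) ((a + 1) * P.K) 0 P.N) ∪
    ⋃ b : {b // b < P.n ∧ ∀ p ∈ P.blocks, p.2 ≠ b},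
      truncatedRectangle 0 P.N (b * P.K) ((b + 1) * P.K)

theorem mul_K_left_mem_skeleton (ha : a ≤ P.n) (hj : j ∈ Ioo 0 P.N) :
    (a * P.K, j) ∈ P.skeleton := by
  obtain ⟨c, hc, hfree, hac⟩ := exists_free_column ha
  refine .inl (.inr (mem_iUnion.2 ⟨⟨c, hc, hfree⟩, ?_⟩))
  grind [truncatedRectangle]

theorem mul_K_right_mem_skeleton (hb : b ≤ P.n) (hi : i ∈ Ioo 0 P.N) :
    (i, b * P.K) ∈ P.skeleton := by
  obtain ⟨c, hc, hfree, hbc⟩ := exists_free_row hb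
  refine .inr (mem_iUnion.2 ⟨⟨c, hc, hfree⟩, ?_⟩)
  grind [truncatedRectangle]

theorem threeLinked_skeleton : ThreeLinked (hasse (ℕ × ℕ)) P.points P.skeleton := by
  have hK := P.four_le_K
  have hN := eight_le_N (P := P)
  have hn := P.two_le_n
  have bottom_free : ∀ p ∈ P.blocks, p.2 ≠ 0 := fun p hp => by have := P.snd_bounds p hp; lia
  have left_free : ∀ p ∈ P.blocks, p.1 ≠ 0 := fun p hp => by have := P.fst_bounds p hp; lia
  have bottom := row_subset_points (b := 0) (by lia) bottom_free
  rw [zero_mul, zero_add, one_mul] at bottom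
  refine ThreeLinked.union_iUnion (.union_iUnion
    ((threeLinked_truncatedRectangle (by lia) (by lia)).mono bottom subset_rfl) ?_ ?_) ?_ ?_
  · exact fun ⟨a, ha, hfree⟩ => (threeLinked_truncatedRectangle (by lia) (by lia)).mono
      (column_subset_points ha hfree) subset_rfl
  · rintro ⟨a, ha, -⟩ s t
    have haN := succ_mul_K_le_N ha
    exact sdiff_pair_nonempty_of_injective (f := fun k => (k, 1)) (Prod.mk_left_injective 1)
      (k := a * P.K + 1) (by grind [truncatedRectangle]) s t
  · exact fun ⟨b, hb, hfree⟩ => (threeLinked_truncatedRectangle (by lia) (by lia)).mono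
      (row_subset_points hb hfree) subset_rfl
  · rintro ⟨b, hb, -⟩ s t
    have hbN := succ_mul_K_le_N hb
    refine sdiff_pair_nonempty_of_injective (f := fun k => (1, k)) (Prod.mk_right_injective 1)
      (k := b * P.K + 1) (fun k hk => ?_) s t
    have left_mem : (1, k) ∈ truncatedRectangle (0 * P.K) ((0 + 1) * P.K) 0 P.N := by
      grind [truncatedRectangle]
    exact ⟨.inr (mem_iUnion.2 ⟨⟨0, by lia, left_free⟩, left_mem⟩), by grind [truncatedRectangle]⟩

theorem points_subset_skeleton_union_coarseCells :
    P.points \ P.corners ⊆ P.skeleton ∪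
      ⋃ p : {p : ℕ × ℕ // p.1 < P.n ∧ p.2 < P.n ∧ p ∉ P.blocks},
        truncatedRectangle (p.1.1 * P.K) ((p.1.1 + 1) * P.K) (p.1.2 * P.K) ((p.1.2 + 1) * P.K) := by
  rintro ⟨i, j⟩ ⟨hij, hcorner⟩
  obtain ⟨⟨hi, hj⟩, hhole⟩ := mem_points.1 hij
  obtain ⟨a, ha, rfl⟩ | ⟨a, ha, hia⟩ := exists_eq_mul_or_mem_Ioo hi
  · by_cases hj' : j ∈ Ioo 0 P.N
    · exact .inl (mul_K_left_mem_skeleton ha hj')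
    · obtain ⟨b, hb, rfl⟩ : ∃ b ≤ P.n, j = b * P.K := by
        obtain rfl | rfl : j = 0 ∨ j = P.N := by grind
        exacts [⟨0, by lia, by simp⟩, ⟨P.n, le_rfl, rfl⟩]
      exact .inl (mul_K_right_mem_skeleton hb (by grind [corners]))
  · have haN := succ_mul_K_le_N ha
    obtain ⟨b, hb, rfl⟩ | ⟨b, hb, hjb⟩ := exists_eq_mul_or_mem_Ioo hj
    · exact .inl (mul_K_right_mem_skeleton hb (by grind))
    · refine .inr (mem_iUnion.2 ⟨⟨(a, b), ha, hb, fun hab => hhole _ hab ⟨hia, hjb⟩⟩, ?_⟩)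
      grind [truncatedRectangle]

theorem threeLinked_points :
    ThreeLinked (hasse (ℕ × ℕ)) P.points (P.points \ P.corners) := by
  have hK := P.four_le_K
  refine (threeLinked_skeleton.union_iUnion ?_ ?_).mono subset_rfl
    points_subset_skeleton_union_coarseCells
  · exact fun ⟨p, ha, hb, hfree⟩ => (threeLinked_truncatedRectangle (by lia) (by lia)).mono
      (coarseCell_subset_points ha hb hfree) subset_rfl
  · rintro ⟨⟨a, b⟩, ha, hb, -⟩ s t
    have hbN := succ_mul_K_le_N hb
    refine sdiff_pair_nonempty_of_injective (f := fun k => (a * P.K, k))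
      (Prod.mk_right_injective _) (k := b * P.K + 1) (fun k hk => ?_) s t
    exact ⟨mul_K_left_mem_skeleton ha.le (by grind), by grind [truncatedRectangle]⟩

theorem hasse_adj_iff {p q : ℕ × ℕ} : (hasse (ℕ × ℕ)).Adj p q ↔
    p.2 = q.2 ∧ (q.1 = p.1 + 1 ∨ p.1 = q.1 + 1) ∨
      p.1 = q.1 ∧ (q.2 = p.2 + 1 ∨ p.2 = q.2 + 1) := by
  simp only [hasse_adj, Prod.covBy_iff, Nat.covBy_iff_add_one_eq]
  grind

theorem exists_unique_neighbor_of_end (h : i = 0 ∨ i = P.N) :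
    ∃ i' ∈ Ioo 0 P.N, ∀ k ≤ P.N, (k = i + 1 ∨ i = k + 1) ↔ k = i' := by
  have := eight_le_N (P := P)
  obtain rfl | rfl := h
  exacts [⟨1, by grind⟩, ⟨P.N - 1, by grind⟩]

theorem neighborSet_corner (hij : (i, j) ∈ P.points) (hi : i = 0 ∨ i = P.N)
    (hj : j = 0 ∨ j = P.N) : ∃ i' ∈ Ioo 0 P.N, ∃ j' ∈ Ioo 0 P.N,
      ((hasse (ℕ × ℕ)).induce P.points).neighborSet ⟨(i, j), hij⟩ =
        Subtype.val ⁻¹' {(i', j), (i, j')} := by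
  obtain ⟨i', hi', hii'⟩ := exists_unique_neighbor_of_end hi
  obtain ⟨j', hj', hjj'⟩ := exists_unique_neighbor_of_end hj
  refine ⟨i', hi', j', hj', ?_⟩
  ext ⟨⟨k, l⟩, hkl⟩
  obtain ⟨⟨hk, hl⟩, -⟩ := mem_points.1 hkl
  simp only [mem_neighborSet, comap_adj, Function.Embedding.subtype_apply, hasse_adj_iff,
    hii' k hk, hjj' l hl, mem_preimage, mem_insert_iff, mem_singleton_iff, Prod.mk.injEq]
  grind

theorem suppressible_corners :
    Suppressible ((hasse (ℕ × ℕ)).induce P.points) (Subtype.val ⁻¹' P.corners) where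
  neighborSet_eq := by
    rintro ⟨⟨i, j⟩, hij⟩ ⟨hi, hj⟩
    obtain ⟨i', hi', j', hj', hN⟩ := neighborSet_corner hij hi hj
    have hu : (i', j) ∈ P.points := mem_points_of_snd_eq_zero_or_N hi'.2.le hj
    have hv : (i, j') ∈ P.points := mem_points_of_fst_eq_zero_or_N hi hj'.2.le
    refine ⟨⟨_, hu⟩, by grind [corners], ⟨_, hv⟩, by grind [corners], by grind, ?_, ?_⟩
    · simp only [comap_adj, Function.Embedding.subtype_apply, hasse_adj_iff]
      grind
    · rw [hN]
      ext w
      simp [Subtype.ext_iff]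
  injOn := by
    rintro ⟨⟨i₁, j₁⟩, h₁⟩ ⟨hi₁, hj₁⟩ ⟨⟨i₂, j₂⟩, h₂⟩ ⟨hi₂, hj₂⟩ h
    obtain ⟨i₁', hi₁', j₁', hj₁', hN₁⟩ := neighborSet_corner h₁ hi₁ hj₁
    obtain ⟨i₂', _, j₂', _, hN₂⟩ := neighborSet_corner h₂ hi₂ hj₂
    have hpre := hN₁.symm.trans (h.trans hN₂)
    have hu := Set.ext_iff.1 hpre ⟨_, mem_points_of_snd_eq_zero_or_N hi₁'.2.le hj₁⟩
    have hv := Set.ext_iff.1 hpre ⟨_, mem_points_of_fst_eq_zero_or_N hi₁ hj₁'.2.le⟩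
    simp only [mem_preimage, mem_insert_iff, mem_singleton_iff, Prod.mk.injEq] at hu hv
    grind

theorem four_le_card_notMem_corners :
    4 ≤ Nat.card {w : P.points // w ∉ Subtype.val ⁻¹' P.corners} := by
  have hN := eight_le_N (P := P)
  have : Finite P.points := ((finite_Icc 0 P.N).prod (finite_Icc 0 P.N)).subset sdiff_subset
  let f : Fin 4 → {w : P.points // w ∉ Subtype.val ⁻¹' P.corners} := fun k =>
    ⟨⟨(k + 1, 0), mem_points_of_snd_eq_zero_or_N (by lia) (.inl rfl)⟩, by grind [corners]⟩
  have hf : Function.Injective f := fun k l h => by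
    simp only [Subtype.mk.injEq, Prod.mk.injEq, f] at h
    grind
  simpa using Nat.card_le_card_of_injective f hf

theorem exists_threeConnected_isSubdivisionOf : ∃ (N : ℕ) (G₀ : SimpleGraph (Fin N)),
    ThreeConnected G₀ ∧ IsSubdivisionOf ((hasse (ℕ × ℕ)).induce P.points) G₀ := by
  classical
  have : Finite P.points := ((finite_Icc 0 P.N).prod (finite_Icc 0 P.N)).subset sdiff_subset
  let D : Set P.points := Subtype.val ⁻¹' P.corners
  have : Fintype {w // w ∉ D} := Fintype.ofFinite _
  have hD : Suppressible ((hasse (ℕ × ℕ)).induce P.points) D := suppressible_corners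
  have hH : ThreeLinked ((hasse (ℕ × ℕ)).induce P.points) univ Dᶜ :=
    threeLinked_points.induce.mono subset_rfl fun u hu => ⟨u.2, hu⟩
  have e := overFinIso (suppress ((hasse (ℕ × ℕ)).induce P.points) D) rfl
  exact ⟨_, _, .of_iso (threeConnected_suppress (fun c hc w hw => hD.notMem_of_adj hc hw)
    four_le_card_notMem_corners hH) e, .of_iso hD.isSubdivisionOf .refl e⟩

end BlockPattern

/-! ### Segments and rectangles in the plane -/

section Plane

variable {x₁ x₂ y₁ y₂ : ℝ} {z : Pt}

theorem mem_segment_horizontal {y : ℝ} (h : x₁ ≤ x₂) :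
    z ∈ segment ℝ ((x₁, y) : Pt) (x₂, y) ↔ z.2 = y ∧ z.1 ∈ Icc x₁ x₂ := by
  rw [← Prod.image_mk_segment_left, segment_eq_Icc h]
  constructor
  · rintro ⟨x, hx, rfl⟩
    exact ⟨rfl, hx⟩
  · rintro ⟨rfl, hx⟩
    exact ⟨z.1, hx, rfl⟩

theorem mem_segment_vertical {x : ℝ} (h : y₁ ≤ y₂) :
    z ∈ segment ℝ ((x, y₁) : Pt) (x, y₂) ↔ z.1 = x ∧ z.2 ∈ Icc y₁ y₂ := by
  rw [← Prod.image_mk_segment_right, segment_eq_Icc h]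
  constructor
  · rintro ⟨y, hy, rfl⟩
    exact ⟨rfl, hy⟩
  · rintro ⟨rfl, hy⟩
    exact ⟨z.2, hy, rfl⟩

theorem frontier_Ioo_prod_Ioo_subset : frontier (Ioo x₁ x₂ ×ˢ Ioo y₁ y₂) ⊆
    Icc x₁ x₂ ×ˢ Icc y₁ y₂ \ Ioo x₁ x₂ ×ˢ Ioo y₁ y₂ := by
  rw [(isOpen_Ioo.prod isOpen_Ioo).frontier_eq]
  exact sdiff_subset_sdiff_left <| closure_minimal
    (prod_mono Ioo_subset_Icc_self Ioo_subset_Icc_self) (isClosed_Icc.prod isClosed_Icc)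

end Plane

section UnitSteps

variable {f : ℕ → ℝ} {i j : ℕ} {z : ℝ}

theorem exists_mem_Icc_succ (hf : Monotone f) (hij : i < j) (hz : z ∈ Icc (f i) (f j)) :
    ∃ k ∈ Ico i j, z ∈ Icc (f k) (f (k + 1)) := by
  obtain heq | hlt := hz.1.eq_or_lt
  · exact ⟨i, ⟨le_rfl, hij⟩, heq.le, heq ▸ hf i.le_succ⟩
  · have hmem : z ∈ ⋃ k ∈ Ico i j, Ioc (f k) (f (Order.succ k)) :=
      hf.biUnion_Ico_Ioc_map_succ i j ▸ ⟨hlt, hz.2⟩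
    simp only [mem_iUnion, exists_prop] at hmem
    exact hmem.imp fun k hk => ⟨hk.1, Ioc_subset_Icc_self hk.2⟩

theorem eq_or_eq_succ_of_mem_Icc (hf : StrictMono f) (h : f j ∈ Icc (f i) (f (i + 1))) :
    j = i ∨ j = i + 1 := by
  have hi := hf.le_iff_le.1 h.1
  have hj := hf.le_iff_le.1 h.2
  lia

theorem mem_endpoints_of_mem_Icc_succ (hf : StrictMono f) (hz : z ∈ Icc (f i) (f (i + 1)))
    (hz' : z ∈ Icc (f j) (f (j + 1))) (hne : i ≠ j) : z = f i ∨ z = f (i + 1) := by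
  have hi := hf.le_iff_le.1 (hz.1.trans hz'.2)
  have hj := hf.le_iff_le.1 (hz'.1.trans hz.2)
  obtain rfl | rfl : j = i + 1 ∨ i = j + 1 := by lia
  exacts [.inr (le_antisymm hz.2 hz'.1), .inl (le_antisymm hz'.2 hz.1)]

end UnitSteps

theorem connectedComponentIn_compl_eq_of_frontier_subset {X : Type*} [TopologicalSpace X]
    {A U : Set X} {x : X} (hU : IsPreconnected U) (hUA : Disjoint U A) (hA : frontier U ⊆ A)
    (hx : x ∈ U) : connectedComponentIn Aᶜ x = U := by
  refine Subset.antisymm ?_ (hU.subset_connectedComponentIn hx hUA.subset_compl_right)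
  have hsub : connectedComponentIn Aᶜ x ⊆ interior U ∪ (closure U)ᶜ := fun z hz => by
    by_contra h
    simp only [mem_union, mem_compl_iff, not_or, not_not] at h
    exact connectedComponentIn_subset _ _ hz (hA ⟨h.2, h.1⟩)
  have hxA : x ∈ Aᶜ := hUA.subset_compl_right hx
  refine (isPreconnected_connectedComponentIn.subset_left_of_subset_union isOpen_interior
    isClosed_closure.isOpen_compl ?_ hsub ⟨x, mem_connectedComponentIn hxA, ?_⟩).trans
    interior_subset
  · exact disjoint_compl_right.mono_left (interior_subset.trans subset_closure)
  · exact (hsub (mem_connectedComponentIn hxA)).resolve_right fun h => h (subset_closure hx)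

-- the ray from `x` away from a point of `s` does not return to `s`
theorem exists_isPreconnected_not_isBounded_disjoint {E : Type*} [NormedAddCommGroup E]
    [NormedSpace ℝ E] {s : Set E} {x : E} (hs : Convex ℝ s) (hne : s.Nonempty) (hx : x ∉ s) :
    ∃ T : Set E, IsPreconnected T ∧ x ∈ T ∧ Disjoint T s ∧ ¬ Bornology.IsBounded T := by
  obtain ⟨p, hp⟩ := hne
  have hpx : 0 < dist p x := dist_pos.2 fun h => hx (h ▸ hp)
  refine ⟨AffineMap.lineMap p x '' Ici (1 : ℝ), isPreconnected_Ici.image _ (by fun_prop),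
    ⟨1, self_mem_Ici, AffineMap.lineMap_apply_one _ _⟩, ?_, fun hb => ?_⟩
  · rw [disjoint_left]
    rintro _ ⟨c, hc : 1 ≤ c, rfl⟩ hcs
    have hmem := hs.lineMap_mem hp hcs (t := c⁻¹) ⟨by positivity, inv_le_one_of_one_le₀ hc⟩
    rw [AffineMap.lineMap_lineMap_right, inv_mul_cancel₀ (by positivity),
      AffineMap.lineMap_apply_one] at hmem
    exact hx hmem
  · obtain ⟨r, hr⟩ := hb.subset_closedBall p
    have hmem := hr (mem_image_of_mem _ (mem_Ici.2 (le_max_left 1 ((r + 1) / dist p x))))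
    rw [mem_closedBall, dist_lineMap_left, Real.norm_of_nonneg (by positivity)] at hmem
    have hle := mul_le_mul_of_nonneg_right (le_max_right 1 ((r + 1) / dist p x)) hpx.le
    rw [div_mul_cancel₀ _ hpx.ne'] at hle
    linarith

/-! ### The plane graph of a grid with blocks -/

/-- A lattice pattern drawn in the plane, column `i` at abscissa `X i` and row `j` at ordinate
`Y j`. -/
structure BlockGrid extends BlockPattern where
  X : ℕ → ℝ
  Y : ℕ → ℝ
  strictMono_X : StrictMono X
  strictMono_Y : StrictMono Y

namespace BlockGrid

variable (D : BlockGrid) {i j i₁ i₂ j₁ j₂ : ℕ} {z : Pt} {e : Pt × Pt} {F : Set Pt}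

/-- The position of a lattice point in the plane. -/
def point (p : ℕ × ℕ) : Pt := (D.X p.1, D.Y p.2)

/-- The open rectangle between two columns and two rows. -/
def openRect (i₁ i₂ j₁ j₂ : ℕ) : Set Pt := Ioo (D.X i₁) (D.X i₂) ×ˢ Ioo (D.Y j₁) (D.Y j₂)

/-- The closed rectangle between two columns and two rows. -/
def closedRect (i₁ i₂ j₁ j₂ : ℕ) : Set Pt := Icc (D.X i₁) (D.X i₂) ×ˢ Icc (D.Y j₁) (D.Y j₂)

/-- The closed rectangle covered by the whole grid. -/
def frame : Set Pt := D.closedRect 0 D.N 0 D.N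

theorem point_injective : Function.Injective D.point := fun _ _ h =>
  Prod.ext (D.strictMono_X.injective (Prod.ext_iff.1 h).1)
    (D.strictMono_Y.injective (Prod.ext_iff.1 h).2)

theorem finite_points : D.points.Finite :=
  ((finite_Icc 0 D.N).prod (finite_Icc 0 D.N)).subset sdiff_subset

/-- The vertices: the lattice points of the pattern. -/
noncomputable def verts : Finset Pt := (D.finite_points.image D.point).toFinset

/-- The edges: the unit steps between two lattice points, directed to the right or upwards. -/
noncomputable def edges : Finset (Pt × Pt) :=
  (((D.finite_points.prod D.finite_points).sep fun e => e.1 ⋖ e.2).image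
    (Prod.map D.point D.point)).toFinset

variable {D}

theorem mem_verts : z ∈ D.verts ↔ ∃ p ∈ D.points, D.point p = z := by
  simp only [verts, Finite.mem_toFinset, mem_image]

theorem mem_edges_iff_covBy :
    e ∈ D.edges ↔ ∃ p ∈ D.points, ∃ q ∈ D.points, p ⋖ q ∧ (D.point p, D.point q) = e := by
  simp only [edges, Finite.mem_toFinset, mem_image, Prod.exists, mem_ofPred_eq, mem_prod, Prod.map]
  grind

theorem mem_edges : e ∈ D.edges ↔
    (∃ i j, (i, j) ∈ D.points ∧ (i + 1, j) ∈ D.points ∧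
      e = ((D.X i, D.Y j), (D.X (i + 1), D.Y j))) ∨
    (∃ i j, (i, j) ∈ D.points ∧ (i, j + 1) ∈ D.points ∧
      e = ((D.X i, D.Y j), (D.X i, D.Y (j + 1)))) := by
  simp only [mem_edges_iff_covBy, Prod.exists, Prod.mk_covBy_mk_iff, Nat.covBy_iff_add_one_eq,
    point]
  grind

theorem mem_segment_step_right :
    z ∈ segment ℝ ((D.X i, D.Y j) : Pt) (D.X (i + 1), D.Y j) ↔
      z.2 = D.Y j ∧ z.1 ∈ Icc (D.X i) (D.X (i + 1)) :=
  mem_segment_horizontal (D.strictMono_X.monotone i.le_succ)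

theorem mem_segment_step_up :
    z ∈ segment ℝ ((D.X i, D.Y j) : Pt) (D.X i, D.Y (j + 1)) ↔
      z.1 = D.X i ∧ z.2 ∈ Icc (D.Y j) (D.Y (j + 1)) :=
  mem_segment_vertical (D.strictMono_Y.monotone j.le_succ)

theorem eq_endpoint_of_mem_segment_of_mem_segment {e f : Pt × Pt} (he : e ∈ D.edges)
    (hf : f ∈ D.edges) (hne : e ≠ f) (hze : z ∈ segment ℝ e.1 e.2)
    (hzf : z ∈ segment ℝ f.1 f.2) : z = e.1 ∨ z = e.2 := by
  obtain ⟨x, y⟩ := z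
  obtain ⟨i, j, -, -, rfl⟩ | ⟨i, j, -, -, rfl⟩ := mem_edges.1 he <;>
  obtain ⟨i', j', -, -, rfl⟩ | ⟨i', j', -, -, rfl⟩ := mem_edges.1 hf <;>
  simp only [mem_segment_step_right, mem_segment_step_up] at hze hzf <;>
  simp only [Prod.mk.injEq]
  · obtain ⟨rfl, hx⟩ := hze
    obtain rfl := D.strictMono_Y.injective hzf.1
    have := mem_endpoints_of_mem_Icc_succ D.strictMono_X hx hzf.2 (by rintro rfl; exact hne rfl)
    tauto
  · obtain ⟨rfl, hx⟩ := hze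
    obtain ⟨rfl, -⟩ := hzf
    obtain rfl | rfl := eq_or_eq_succ_of_mem_Icc D.strictMono_X hx <;> tauto
  · obtain ⟨rfl, hy⟩ := hze
    obtain ⟨rfl, -⟩ := hzf
    obtain rfl | rfl := eq_or_eq_succ_of_mem_Icc D.strictMono_Y hy <;> tauto
  · obtain ⟨rfl, hy⟩ := hze
    obtain rfl := D.strictMono_X.injective hzf.1
    have := mem_endpoints_of_mem_Icc_succ D.strictMono_Y hy hzf.2 (by rintro rfl; exact hne rfl)
    tauto

theorem eq_endpoint_of_mem_verts (he : e ∈ D.edges) (hz : z ∈ D.verts)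
    (hze : z ∈ segment ℝ e.1 e.2) : z = e.1 ∨ z = e.2 := by
  obtain ⟨p, -, rfl⟩ := mem_verts.1 hz
  obtain ⟨i, j, -, -, rfl⟩ | ⟨i, j, -, -, rfl⟩ := mem_edges.1 he <;>
  simp only [mem_segment_step_right, mem_segment_step_up, point] at hze <;>
  simp only [point, Prod.mk.injEq]
  · have := eq_or_eq_succ_of_mem_Icc D.strictMono_X hze.2
    grind
  · have := eq_or_eq_succ_of_mem_Icc D.strictMono_Y hze.2
    grind

variable (D) in
/-- The plane graph formed by the vertices and edges of a grid. -/
noncomputable def graph : GridPlaneGraph where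
  verts := D.verts
  edges := D.edges
  ends_mem e he := by
    obtain ⟨p, hp, q, hq, -, rfl⟩ := mem_edges_iff_covBy.1 he
    exact ⟨mem_verts.2 ⟨p, hp, rfl⟩, mem_verts.2 ⟨q, hq, rfl⟩⟩
  nondeg e he := by
    obtain ⟨p, -, q, -, hpq, rfl⟩ := mem_edges_iff_covBy.1 he
    exact D.point_injective.ne hpq.ne
  axisAligned e he := by
    obtain ⟨i, j, -, -, rfl⟩ | ⟨i, j, -, -, rfl⟩ := mem_edges.1 he
    exacts [.inr rfl, .inl rfl]
  meet_at_ends e he f hf hne _ _ hxe hxf :=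
    ⟨eq_endpoint_of_mem_segment_of_mem_segment he hf hne hxe hxf,
      eq_endpoint_of_mem_segment_of_mem_segment hf he hne.symm hxf hxe⟩
  no_vertex_interior _ he _ hv hx := eq_endpoint_of_mem_verts he hv hx

theorem mem_drawing : z ∈ D.graph.drawing ↔
    (∃ i j, (i, j) ∈ D.points ∧ (i + 1, j) ∈ D.points ∧
      z.2 = D.Y j ∧ z.1 ∈ Icc (D.X i) (D.X (i + 1))) ∨
    (∃ i j, (i, j) ∈ D.points ∧ (i, j + 1) ∈ D.points ∧
      z.1 = D.X i ∧ z.2 ∈ Icc (D.Y j) (D.Y (j + 1))) := by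
  simp only [GridPlaneGraph.drawing, mem_iUnion, exists_prop]
  constructor
  · rintro ⟨e, he, hz⟩
    obtain ⟨i, j, h, h', rfl⟩ | ⟨i, j, h, h', rfl⟩ := mem_edges.1 he
    exacts [.inl ⟨i, j, h, h', mem_segment_step_right.1 hz⟩,
      .inr ⟨i, j, h, h', mem_segment_step_up.1 hz⟩]
  · rintro (⟨i, j, h, h', hz⟩ | ⟨i, j, h, h', hz⟩)
    exacts [⟨_, mem_edges.2 (.inl ⟨i, j, h, h', rfl⟩), mem_segment_step_right.2 hz⟩,
      ⟨_, mem_edges.2 (.inr ⟨i, j, h, h', rfl⟩), mem_segment_step_up.2 hz⟩]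

variable (D) in
/-- The plane graph of a grid, as an abstract graph, is its lattice pattern. -/
noncomputable def graphIso :
    (SimpleGraph.hasse (ℕ × ℕ)).induce D.points ≃g D.graph.graph where
  toEquiv := (Equiv.Set.image D.point D.points D.point_injective).trans
    (Equiv.setCongr (by ext; exact mem_verts.symm))
  map_rel_iff' := by
    rintro ⟨p, hp⟩ ⟨q, hq⟩
    have hedge : ∀ {p q}, p ∈ D.points → q ∈ D.points →
        ((D.point p, D.point q) ∈ D.graph.edges ↔ p ⋖ q) := fun {p q} hp hq => by
      refine mem_edges_iff_covBy.trans ⟨?_, fun h => ⟨p, hp, q, hq, h, rfl⟩⟩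
      rintro ⟨p', -, q', -, h, heq⟩
      obtain ⟨hp', hq'⟩ := Prod.ext_iff.1 heq
      rwa [D.point_injective hp', D.point_injective hq'] at h
    simp only [GridPlaneGraph.graph, SimpleGraph.fromRel_adj, SimpleGraph.comap_adj,
      SimpleGraph.hasse_adj, Function.Embedding.subtype_apply]
    change _ ∧ ((D.point p, D.point q) ∈ D.graph.edges ∨ (D.point q, D.point p) ∈ D.graph.edges) ↔ _
    rw [hedge hp hq, hedge hq hp, and_iff_right_iff_imp]
    rintro h heq
    have : p = q := D.point_injective (Subtype.ext_iff.1 heq)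
    simp [this] at h

variable (D) in
theorem exists_threeConnected_isSubdivisionOf : ∃ (N : ℕ) (G₀ : SimpleGraph (Fin N)),
    ThreeConnected G₀ ∧ IsSubdivisionOf D.graph.graph G₀ := by
  obtain ⟨N, G₀, hG₀, hsub⟩ := D.toBlockPattern.exists_threeConnected_isSubdivisionOf
  exact ⟨N, G₀, hG₀, hsub.of_iso D.graphIso .refl⟩

/-! ### The faces of a grid with blocks -/

theorem closedRect_sdiff_openRect_subset_drawing (h : D.IsCell i₁ i₂ j₁ j₂) :
    D.closedRect i₁ i₂ j₁ j₂ \ D.openRect i₁ i₂ j₁ j₂ ⊆ D.graph.drawing := by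
  rintro ⟨x, y⟩ ⟨⟨hx, hy⟩, hxy⟩
  have hb := h.boundary_subset_points
  obtain ⟨hi, -, hj, -⟩ := h.bounds
  obtain ⟨i, hi', hix⟩ := exists_mem_Icc_succ D.strictMono_X.monotone hi hx
  obtain ⟨j, hj', hjy⟩ := exists_mem_Icc_succ D.strictMono_Y.monotone hj hy
  have hside : x = D.X i₁ ∨ x = D.X i₂ ∨ y = D.Y j₁ ∨ y = D.Y j₂ := by
    simp only [openRect] at hxy
    grind
  obtain hx | hx | hy | hy := hside
  · exact mem_drawing.2 (.inr ⟨i₁, j, hb (by grind), hb (by grind), hx, hjy⟩)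
  · exact mem_drawing.2 (.inr ⟨i₂, j, hb (by grind), hb (by grind), hx, hjy⟩)
  · exact mem_drawing.2 (.inl ⟨i, j₁, hb (by grind), hb (by grind), hy, hix⟩)
  · exact mem_drawing.2 (.inl ⟨i, j₂, hb (by grind), hb (by grind), hy, hix⟩)

theorem disjoint_openRect_drawing (h : D.IsCell i₁ i₂ j₁ j₂) :
    Disjoint (D.openRect i₁ i₂ j₁ j₂) D.graph.drawing := by
  have hX := D.strictMono_X
  have hY := D.strictMono_Y
  rw [disjoint_left]
  rintro ⟨x, y⟩ ⟨hx, hy⟩ hz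
  obtain ⟨i, j, hmem, hmem', rfl, hix⟩ | ⟨i, j, hmem, hmem', rfl, hjy⟩ := mem_drawing.1 hz
  · have hi₁ := hX.lt_iff_lt.1 (hx.1.trans_le hix.2)
    have hi₂ := hX.lt_iff_lt.1 (hix.1.trans_lt hx.2)
    have := h.notMem_points_left (i := i) ⟨by lia, hi₂⟩ ⟨hY.lt_iff_lt.1 hy.1, hY.lt_iff_lt.1 hy.2⟩
    tauto
  · have hj₁ := hY.lt_iff_lt.1 (hy.1.trans_le hjy.2)
    have hj₂ := hY.lt_iff_lt.1 (hjy.1.trans_lt hy.2)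
    have := h.notMem_points_right (j := j) ⟨hX.lt_iff_lt.1 hx.1, hX.lt_iff_lt.1 hx.2⟩ ⟨by lia, hj₂⟩
    tauto

theorem exists_isCell_of_mem_frame (hz : z ∈ D.frame) :
    ∃ i₁ i₂ j₁ j₂, D.IsCell i₁ i₂ j₁ j₂ ∧ z ∈ D.closedRect i₁ i₂ j₁ j₂ := by
  have hX := D.strictMono_X.monotone
  have hY := D.strictMono_Y.monotone
  have hN := D.eight_le_N
  obtain ⟨i, hi, hix⟩ := exists_mem_Icc_succ hX (by lia) hz.1
  obtain ⟨j, hj, hjy⟩ := exists_mem_Icc_succ hY (by lia) hz.2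
  obtain ⟨i₁, i₂, j₁, j₂, h, hi', hj'⟩ := D.exists_isCell hi.2 hj.2
  exact ⟨i₁, i₂, j₁, j₂, h, Icc_subset_Icc (hX hi'.1) (hX hi'.2) hix,
    Icc_subset_Icc (hY hj'.1) (hY hj'.2) hjy⟩

theorem drawing_subset_frame : D.graph.drawing ⊆ D.frame := by
  have hX := D.strictMono_X.monotone
  have hY := D.strictMono_Y.monotone
  rintro ⟨x, y⟩ hz
  obtain ⟨i, j, -, h, rfl, hx⟩ | ⟨i, j, -, h, rfl, hy⟩ := mem_drawing.1 hz
  · obtain ⟨hi, hj⟩ := (BlockPattern.mem_points.1 h).1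
    exact ⟨⟨(hX i.zero_le).trans hx.1, hx.2.trans (hX hi)⟩, hY j.zero_le, hY hj⟩
  · obtain ⟨hi, hj⟩ := (BlockPattern.mem_points.1 h).1
    exact ⟨⟨hX i.zero_le, hX hi⟩, (hY j.zero_le).trans hy.1, hy.2.trans (hY hj)⟩

theorem connectedComponentIn_eq_openRect (h : D.IsCell i₁ i₂ j₁ j₂)
    (hz : z ∈ D.closedRect i₁ i₂ j₁ j₂) (hzd : z ∉ D.graph.drawing) :
    connectedComponentIn D.graph.drawingᶜ z = D.openRect i₁ i₂ j₁ j₂ := by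
  have hb := closedRect_sdiff_openRect_subset_drawing h
  refine connectedComponentIn_compl_eq_of_frontier_subset
    ((convex_Ioo _ _).prod (convex_Ioo _ _)).isPreconnected (disjoint_openRect_drawing h)
    (frontier_Ioo_prod_Ioo_subset.trans hb) ?_
  by_contra hzo
  exact hzd (hb ⟨hz, hzo⟩)

theorem isCell_or_disjoint_frame_of_isFace (hF : D.graph.IsFace F) :
    (∃ i₁ i₂ j₁ j₂, D.IsCell i₁ i₂ j₁ j₂ ∧ F = D.openRect i₁ i₂ j₁ j₂) ∨
      Disjoint F D.frame ∧ ¬ Bornology.IsBounded F := by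
  obtain ⟨x, hx, rfl⟩ := hF
  rw [or_iff_not_imp_right]
  intro h
  obtain ⟨z, hz, hzf⟩ : (connectedComponentIn D.graph.drawingᶜ x ∩ D.frame).Nonempty := by
    by_contra hdisj
    rw [← disjoint_iff_inter_eq_empty.trans not_nonempty_iff_eq_empty.symm] at hdisj
    have hxF : x ∉ D.frame := disjoint_left.1 hdisj (mem_connectedComponentIn hx)
    have hne : D.frame.Nonempty := ⟨D.point (0, 0),
      ⟨le_rfl, D.strictMono_X.monotone D.N.zero_le⟩, le_rfl, D.strictMono_Y.monotone D.N.zero_le⟩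
    obtain ⟨T, hT, hxT, hTF, hTb⟩ := exists_isPreconnected_not_isBounded_disjoint
      ((convex_Icc _ _).prod (convex_Icc _ _)) hne hxF
    exact h ⟨hdisj, fun hb => hTb (hb.subset (hT.subset_connectedComponentIn hxT
      (hTF.mono_right drawing_subset_frame).subset_compl_right))⟩
  obtain ⟨i₁, i₂, j₁, j₂, hcell, hzc⟩ := exists_isCell_of_mem_frame hzf
  rw [connectedComponentIn_eq hz]
  exact ⟨i₁, i₂, j₁, j₂, hcell,
    connectedComponentIn_eq_openRect hcell hzc (connectedComponentIn_subset _ _ hz)⟩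

theorem exists_isFine_of_mem_edges (he : e ∈ D.graph.edges) :
    (∃ i j, D.IsFine i j ∧ segment ℝ e.1 e.2 ⊆ D.closedRect i (i + 1) j (j + 1)) ∧
      ((∃ k, segment ℝ e.1 e.2 ⊆ {z | z.1 = D.X k}) ∨
        ∃ k, segment ℝ e.1 e.2 ⊆ {z | z.2 = D.Y k}) := by
  have hX := D.strictMono_X.monotone
  have hY := D.strictMono_Y.monotone
  obtain ⟨i, j, h, h', rfl⟩ | ⟨i, j, h, h', rfl⟩ := mem_edges.1 he
  · refine ⟨?_, .inr ⟨j, fun z hz => (mem_segment_step_right.1 hz).1⟩⟩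
    obtain ⟨j', hfine, hj⟩ := D.exists_isFine_of_mem_points_left h h'
    refine ⟨i, j', hfine, fun z hz => ?_⟩
    obtain ⟨hzj, hzi⟩ := mem_segment_step_right.1 hz
    exact ⟨hzi, hzj ▸ ⟨hY (by lia), hY (by lia)⟩⟩
  · refine ⟨?_, .inl ⟨i, fun z hz => (mem_segment_step_up.1 hz).1⟩⟩
    obtain ⟨i', hfine, hi⟩ := D.exists_isFine_of_mem_points_right h h'
    refine ⟨i', j, hfine, fun z hz => ?_⟩
    obtain ⟨hzi, hzj⟩ := mem_segment_step_up.1 hz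
    exact ⟨hzi ▸ ⟨hX (by lia), hX (by lia)⟩, hzj⟩

end BlockGrid

/-! ### Crossing the boundary of a rectangle -/

/-- The closed ray from `p` in direction `d`; it is the point `p` if `d = 0`. -/
def ray (p d : Pt) : Set Pt := (fun τ : ℝ => p + τ • d) '' Ici 0

theorem subsingleton_ray_inter_frontier {s : Set Pt} {p : Pt} (hs : Convex ℝ s)
    (hp : p ∈ interior s) (d : Pt) : (ray p d ∩ frontier s).Subsingleton := by
  have hlt : ∀ {τ τ' : ℝ}, 0 ≤ τ → τ < τ' → p + τ • d ∈ frontier s → p + τ' • d ∉ frontier s := by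
    intro τ τ' hτ hττ' hx hy
    obtain rfl | hτ := hτ.eq_or_lt
    · exact hx.2 (by simpa using hp)
    refine hx.2 (hs.openSegment_interior_closure_subset_interior hp hy.1 ?_)
    rw [openSegment_eq_image']
    have hpos : 0 < τ' := hτ.trans hττ'
    refine ⟨τ / τ', ⟨by positivity, (div_lt_one hpos).2 hττ'⟩, ?_⟩
    simp only [add_sub_cancel_left, smul_smul, div_mul_cancel₀ τ hpos.ne']
  rintro _ ⟨⟨τ, hτ, rfl⟩, hx⟩ _ ⟨⟨τ', hτ', rfl⟩, hy⟩
  obtain h | rfl | h := lt_trichotomy τ τ'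
  exacts [(hlt hτ h hx hy).elim, rfl, (hlt hτ' h hy hx).elim]

theorem eq_or_eq_or_eq_of_mem_union {α : Type*} {s t : Set α} {x y z : α} (hs : s.Subsingleton)
    (ht : t.Subsingleton) (hx : x ∈ s ∪ t) (hy : y ∈ s ∪ t) (hz : z ∈ s ∪ t) :
    x = y ∨ x = z ∨ y = z := by
  obtain hx | hx := hx <;> obtain hy | hy := hy <;> obtain hz | hz := hz
  exacts [.inl (hs hx hy), .inl (hs hx hy), .inr (.inl (hs hx hz)), .inr (.inr (ht hy hz)),
    .inr (.inr (hs hy hz)), .inr (.inl (ht hx hz)), .inl (ht hx hy), .inl (ht hx hy)]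

theorem fst_eq_or_snd_eq_of_sbtw {x₁ x₂ y₁ y₂ : ℝ} {x y z : Pt} (h : Sbtw ℝ x y z)
    (hx : x ∈ Icc x₁ x₂ ×ˢ Icc y₁ y₂) (hz : z ∈ Icc x₁ x₂ ×ˢ Icc y₁ y₂)
    (hy : y ∈ frontier (Ioo x₁ x₂ ×ˢ Ioo y₁ y₂)) :
    (x.1 = y.1 ∧ (y.1 = x₁ ∨ y.1 = x₂)) ∨ (x.2 = y.2 ∧ (y.2 = y₁ ∨ y.2 = y₂)) := by
  have hend : ∀ {a b s t u : ℝ}, s ∈ Icc a b → u ∈ Icc a b → t ∈ openSegment ℝ s u →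
      (t = a ∨ t = b) → s = t := fun {a b s t u} hs hu ht h => by
    have hext : t ∈ (Icc a b).extremePoints ℝ := by
      rwa [extremePoints_Icc (hs.1.trans hs.2)]
    exact ((mem_extremePoints.1 hext).2 s hs u hu ht).1
  have hseg : y ∈ openSegment ℝ x z := by
    rw [openSegment_eq_image_lineMap]
    exact h.mem_image_Ioo
  have hfst : y.1 ∈ openSegment ℝ x.1 z.1 :=
    image_openSegment ℝ (LinearMap.fst ℝ ℝ ℝ).toAffineMap x z ▸ mem_image_of_mem _ hseg
  have hsnd : y.2 ∈ openSegment ℝ x.2 z.2 :=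
    image_openSegment ℝ (LinearMap.snd ℝ ℝ ℝ).toAffineMap x z ▸ mem_image_of_mem _ hseg
  obtain ⟨⟨hy₁, hy₂⟩, hyo⟩ := frontier_Ioo_prod_Ioo_subset hy
  have hside : (y.1 = x₁ ∨ y.1 = x₂) ∨ (y.2 = y₁ ∨ y.2 = y₂) := by
    grind
  exact hside.imp (fun h => ⟨hend hx.1 hz.1 hfst h, h⟩) fun h => ⟨hend hx.2 hz.2 hsnd h, h⟩

/-! ### Families of sets that are locally straight or star-shaped -/

section LocalStructure

variable {V : Type*} {C : V → Set Pt} {B B' : Set Pt} {p x y : Pt}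

variable (C) in
/-- Inside `B` the family `C` looks like a part of a single line, belonging to a single member of
the family; a linear functional constant on this part of the line has an infinite fibre. -/
structure StraightIn (B : Set Pt) : Prop where
  eq_of_nonempty : ∀ u v, (C u ∩ B).Nonempty → (C v ∩ B).Nonempty → u = v
  collinear : Collinear ℝ (B ∩ ⋃ v, C v)
  infinite_fiber : ∀ x ∈ B ∩ ⋃ v, C v, ∀ y ∈ B ∩ ⋃ v, C v, x ≠ y →
    ∀ f : Pt →ₗ[ℝ] ℝ, f x = f y → {z ∈ ⋃ v, C v | f z = f y}.Infinite

theorem StraightIn.mono (h : StraightIn C B) (hB : B' ⊆ B) : StraightIn C B' where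
  eq_of_nonempty u v hu hv :=
    h.eq_of_nonempty u v (hu.mono (inter_subset_inter_right _ hB))
      (hv.mono (inter_subset_inter_right _ hB))
  collinear := h.collinear.subset (inter_subset_inter_left _ hB)
  infinite_fiber x hx y hy := h.infinite_fiber x ⟨hB hx.1, hx.2⟩ y ⟨hB hy.1, hy.2⟩

theorem StraightIn.of_disjoint (h : Disjoint B (⋃ v, C v)) : StraightIn C B where
  eq_of_nonempty u _ hu _ := by
    obtain ⟨x, hx, hxB⟩ := hu
    exact (disjoint_left.1 h hxB (mem_iUnion_of_mem u hx)).elim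
  collinear := by
    rw [h.inter_eq]
    exact collinear_empty ℝ Pt
  infinite_fiber x hx := (disjoint_left.1 h hx.1 hx.2).elim

theorem StraightIn.eq_of_finite_fiber (h : StraightIn C B) (hx : x ∈ B ∩ ⋃ v, C v)
    (hy : y ∈ B ∩ ⋃ v, C v) (f : Pt →ₗ[ℝ] ℝ) (hf : f x = f y)
    (hfin : {z ∈ ⋃ v, C v | f z = f y}.Finite) : x = y :=
  not_not.1 fun hxy => h.infinite_fiber x hx y hy hxy f hf hfin

variable (C) in
/-- Inside `B` each member of `C` that meets `B` passes through `p` and is contained in two rays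
from `p`. -/
def StarIn (p : Pt) (B : Set Pt) : Prop :=
  ∀ v, (C v ∩ B).Nonempty → p ∈ C v ∧ ∃ d₁ d₂, C v ∩ B ⊆ ray p d₁ ∪ ray p d₂

theorem StarIn.mono (h : StarIn C p B) (hB : B' ⊆ B) : StarIn C p B' := fun v hv => by
  have hsub := inter_subset_inter_right (C v) hB
  exact (h v (hv.mono hsub)).imp_right fun ⟨d₁, d₂, hd⟩ => ⟨d₁, d₂, hsub.trans hd⟩

end LocalStructure

/-! ### Grids adapted to a family of sets -/

namespace BlockGrid

theorem openRect_subset_closedRect {D : BlockGrid} {i₁ i₂ j₁ j₂ : ℕ} :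
    D.openRect i₁ i₂ j₁ j₂ ⊆ D.closedRect i₁ i₂ j₁ j₂ :=
  prod_mono Ioo_subset_Icc_self Ioo_subset_Icc_self

/-- The grid `D` is adapted to the family `C` with special points `S`: its lines are in general
position with respect to `C`, the special points are separated by the blocks, and the family is
straight in the fine cells and star-shaped in the blocks. -/
structure IsAdapted (D : BlockGrid) {V : Type*} (C : V → Set Pt) (S : Set Pt) : Prop where
  subset_openRect : ∀ v, C v ⊆ D.openRect 0 D.N 0 D.N
  notMem_of_mem_verts : ∀ z ∈ D.verts, ∀ v, z ∉ C v
  finite_fst_eq : ∀ k, {z ∈ ⋃ v, C v | z.1 = D.X k}.Finite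
  finite_snd_eq : ∀ k, {z ∈ ⋃ v, C v | z.2 = D.Y k}.Finite
  subset_iUnion : S ⊆ ⋃ v, C v
  disjoint_of_isFine : ∀ i j, D.IsFine i j → Disjoint S (D.closedRect i (i + 1) j (j + 1))
  straightIn : ∀ i j, D.IsFine i j → StraightIn C (D.closedRect i (i + 1) j (j + 1))
  exists_starIn : ∀ q ∈ D.blocks,
    ∃ p ∈ D.openRect (q.1 * D.K) ((q.1 + 1) * D.K) (q.2 * D.K) ((q.2 + 1) * D.K),
      S ∩ D.openRect (q.1 * D.K) ((q.1 + 1) * D.K) (q.2 * D.K) ((q.2 + 1) * D.K) ⊆ {p} ∧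
      StarIn C p (D.closedRect (q.1 * D.K) ((q.1 + 1) * D.K) (q.2 * D.K) ((q.2 + 1) * D.K))

namespace IsAdapted

variable {D : BlockGrid} {V : Type*} {C : V → Set Pt} {S F F₁ F₂ : Set Pt} {e : Pt × Pt}
  {u v : V} {x y z p : Pt}

theorem disjoint_outer_face (h : D.IsAdapted C S) (hF : Disjoint F D.frame) (v : V) :
    Disjoint F (C v) :=
  hF.mono_right ((h.subset_openRect v).trans openRect_subset_closedRect)

theorem inter_eq_empty_of_not_isBounded (h : D.IsAdapted C S) (hF : D.graph.IsFace F)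
    (hb : ¬ Bornology.IsBounded F) (v : V) : F ∩ C v = ∅ := by
  obtain ⟨i₁, i₂, j₁, j₂, -, rfl⟩ | ⟨hF, -⟩ := isCell_or_disjoint_frame_of_isFace hF
  · exact (hb ((isBounded_Ioo _ _).prod (isBounded_Ioo _ _))).elim
  · exact (h.disjoint_outer_face hF v).inter_eq

theorem notMem_segment (h : D.IsAdapted C S) (he : e ∈ D.graph.edges) (hz : z ∈ S) :
    z ∉ segment ℝ e.1 e.2 := fun hze => by
  obtain ⟨⟨i, j, hfine, hsub⟩, -⟩ := exists_isFine_of_mem_edges he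
  exact disjoint_left.1 (h.disjoint_of_isFine i j hfine) hz (hsub hze)

theorem exists_block_of_inter_nonempty (h : D.IsAdapted C S) (hF : D.graph.IsFace F)
    (hne : (F ∩ S).Nonempty) : ∃ q ∈ D.blocks,
      F = D.openRect (q.1 * D.K) ((q.1 + 1) * D.K) (q.2 * D.K) ((q.2 + 1) * D.K) := by
  obtain ⟨p, hpF, hpS⟩ := hne
  obtain ⟨_, _, _, _, ⟨hfine, rfl, rfl⟩ | ⟨q, hq, rfl, rfl, rfl, rfl⟩, rfl⟩ | ⟨hF, -⟩ :=
    isCell_or_disjoint_frame_of_isFace hF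
  · exact (disjoint_left.1 (h.disjoint_of_isFine _ _ hfine) hpS
      (openRect_subset_closedRect hpF)).elim
  · exact ⟨q, hq, rfl⟩
  · obtain ⟨v, hv⟩ := mem_iUnion.1 (h.subset_iUnion hpS)
    exact (disjoint_left.1 (h.disjoint_outer_face hF v) hpF hv).elim

theorem subsingleton_face_inter (h : D.IsAdapted C S) (hF : D.graph.IsFace F) :
    (F ∩ S).Subsingleton := by
  obtain hempty | hne := (F ∩ S).eq_empty_or_nonempty
  · exact hempty ▸ subsingleton_empty
  obtain ⟨q, hq, rfl⟩ := h.exists_block_of_inter_nonempty hF hne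
  obtain ⟨p, -, hp, -⟩ := h.exists_starIn q hq
  exact subsingleton_singleton.anti (inter_comm _ S ▸ hp)

theorem closure_inter_closure_eq_empty (h : D.IsAdapted C S) (hF₁ : D.graph.IsFace F₁)
    (hF₂ : D.graph.IsFace F₂) (hne : F₁ ≠ F₂) (h₁ : (F₁ ∩ S).Nonempty)
    (h₂ : (F₂ ∩ S).Nonempty) : closure F₁ ∩ closure F₂ = ∅ := by
  obtain ⟨q₁, hq₁, rfl⟩ := h.exists_block_of_inter_nonempty hF₁ h₁
  obtain ⟨q₂, hq₂, rfl⟩ := h.exists_block_of_inter_nonempty hF₂ h₂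
  have hclosure : ∀ i₁ i₂ j₁ j₂, closure (D.openRect i₁ i₂ j₁ j₂) ⊆ D.closedRect i₁ i₂ j₁ j₂ :=
    fun _ _ _ _ => closure_minimal openRect_subset_closedRect (isClosed_Icc.prod isClosed_Icc)
  have hle : ∀ {f : ℕ → ℝ}, StrictMono f → ∀ {a b : ℕ} {t : ℝ}, t ≤ f ((a + 1) * D.K) →
      f (b * D.K) ≤ t → b ≤ a + 1 :=
    fun {f} hf {a b t} ht ht' =>
      Nat.le_of_mul_le_mul_right (hf.le_iff_le.1 (ht'.trans ht)) (by have := D.four_le_K; lia)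
  refine eq_empty_of_forall_notMem fun z ⟨hz₁, hz₂⟩ => hne ?_
  obtain ⟨⟨hx₁, hx₁'⟩, hy₁, hy₁'⟩ := hclosure _ _ _ _ hz₁
  obtain ⟨⟨hx₂, hx₂'⟩, hy₂, hy₂'⟩ := hclosure _ _ _ _ hz₂
  have hfst : q₁.1 = q₂.1 := by
    have := hle D.strictMono_X hx₁' hx₂
    have := hle D.strictMono_X hx₂' hx₁
    have := D.fst_ne_succ q₁ hq₁ q₂ hq₂
    have := D.fst_ne_succ q₂ hq₂ q₁ hq₁
    lia
  have hsnd : q₁.2 = q₂.2 := by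
    have := hle D.strictMono_Y hy₁' hy₂
    have := hle D.strictMono_Y hy₂' hy₁
    have := D.snd_ne_succ q₁ hq₁ q₂ hq₂
    have := D.snd_ne_succ q₂ hq₂ q₁ hq₁
    lia
  rw [hfst, hsnd]

theorem subsingleton_segment_inter (h : D.IsAdapted C S) (he : e ∈ D.graph.edges) :
    (segment ℝ e.1 e.2 ∩ ⋃ v, C v).Subsingleton := by
  rintro x ⟨hx, hxC⟩ y ⟨hy, hyC⟩
  obtain ⟨⟨i, j, hfine, hsub⟩, ⟨k, hk⟩ | ⟨k, hk⟩⟩ := exists_isFine_of_mem_edges he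
  · refine (h.straightIn i j hfine).eq_of_finite_fiber ⟨hsub hx, hxC⟩ ⟨hsub hy, hyC⟩
      (LinearMap.fst ℝ ℝ ℝ) ((hk hx).trans (hk hy).symm) ?_
    simpa only [LinearMap.fst_apply, show y.1 = D.X k from hk hy] using h.finite_fst_eq k
  · refine (h.straightIn i j hfine).eq_of_finite_fiber ⟨hsub hx, hxC⟩ ⟨hsub hy, hyC⟩
      (LinearMap.snd ℝ ℝ ℝ) ((hk hx).trans (hk hy).symm) ?_
    simpa only [LinearMap.snd_apply, show y.2 = D.Y k from hk hy] using h.finite_snd_eq k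

theorem exists_mem_inter_of_ne (h : D.IsAdapted C S) (hF : D.graph.IsFace F) (huv : u ≠ v)
    (hu : (F ∩ C u).Nonempty) (hv : (F ∩ C v).Nonempty) :
    ∃ p ∈ F, ∀ w, (F ∩ C w).Nonempty → p ∈ C w := by
  obtain ⟨_, _, _, _, ⟨hfine, rfl, rfl⟩ | ⟨q, hq, rfl, rfl, rfl, rfl⟩, rfl⟩ | ⟨hF, -⟩ :=
    isCell_or_disjoint_frame_of_isFace hF
  · rw [inter_comm] at hu hv
    exact (huv ((h.straightIn _ _ hfine).eq_of_nonempty u v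
      (hu.mono (inter_subset_inter_right _ openRect_subset_closedRect))
      (hv.mono (inter_subset_inter_right _ openRect_subset_closedRect)))).elim
  · obtain ⟨p, hp, -, hstar⟩ := h.exists_starIn q hq
    refine ⟨p, hp, fun w hw => (hstar w ?_).1⟩
    rw [inter_comm] at hw
    exact hw.mono (inter_subset_inter_right _ openRect_subset_closedRect)
  · exact (hu.ne_empty (h.disjoint_outer_face hF u).inter_eq).elim

theorem eq_of_sbtw (h : D.IsAdapted C S) {i j : ℕ} (hfine : D.IsFine i j)
    (hx : x ∈ D.closedRect i (i + 1) j (j + 1) ∩ ⋃ v, C v)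
    (hy : y ∈ D.closedRect i (i + 1) j (j + 1) ∩ ⋃ v, C v)
    (hyF : y ∈ frontier (D.openRect i (i + 1) j (j + 1)))
    (hz : z ∈ D.closedRect i (i + 1) j (j + 1)) : ¬ Sbtw ℝ x y z := fun hxyz => by
  have hS := h.straightIn i j hfine
  refine hxyz.left_ne ?_
  obtain ⟨hxy, hside⟩ | ⟨hxy, hside⟩ := fst_eq_or_snd_eq_of_sbtw hxyz hx.1 hz hyF
  · refine hS.eq_of_finite_fiber hx hy (LinearMap.fst ℝ ℝ ℝ) hxy ?_
    obtain hside | hside := hside <;>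
    simpa only [LinearMap.fst_apply, hside] using h.finite_fst_eq _
  · refine hS.eq_of_finite_fiber hx hy (LinearMap.snd ℝ ℝ ℝ) hxy ?_
    obtain hside | hside := hside <;>
    simpa only [LinearMap.snd_apply, hside] using h.finite_snd_eq _

theorem eq_or_eq_or_eq_of_mem_frontier_fine (h : D.IsAdapted C S) {i j : ℕ}
    (hfine : D.IsFine i j) (hx : x ∈ C v ∩ frontier (D.openRect i (i + 1) j (j + 1)))
    (hy : y ∈ C v ∩ frontier (D.openRect i (i + 1) j (j + 1)))
    (hz : z ∈ C v ∩ frontier (D.openRect i (i + 1) j (j + 1))) : x = y ∨ x = z ∨ y = z := by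
  have hmem : ∀ {w}, w ∈ C v ∩ frontier (D.openRect i (i + 1) j (j + 1)) →
      w ∈ D.closedRect i (i + 1) j (j + 1) ∩ ⋃ v, C v := fun hw =>
    ⟨(frontier_Ioo_prod_Ioo_subset hw.2).1, mem_iUnion_of_mem v hw.1⟩
  have hcol : Collinear ℝ {x, y, z} := (h.straightIn i j hfine).collinear.subset (by
    rintro _ (rfl | rfl | rfl)
    exacts [hmem hx, hmem hy, hmem hz])
  by_contra! hne
  obtain hb | hb | hb := hcol.wbtw_or_wbtw_or_wbtw
  · exact h.eq_of_sbtw hfine (hmem hx) (hmem hy) hy.2 (hmem hz).1 ⟨hb, hne.1.symm, hne.2.2⟩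
  · exact h.eq_of_sbtw hfine (hmem hy) (hmem hz) hz.2 (hmem hx).1 ⟨hb, hne.2.2.symm, hne.2.1.symm⟩
  · exact h.eq_of_sbtw hfine (hmem hz) (hmem hx) hx.2 (hmem hy).1 ⟨hb, hne.2.1, hne.1⟩

theorem eq_or_eq_or_eq_of_starIn {i₁ i₂ j₁ j₂ : ℕ} (hp : p ∈ D.openRect i₁ i₂ j₁ j₂)
    (hstar : StarIn C p (D.closedRect i₁ i₂ j₁ j₂))
    (hx : x ∈ C v ∩ frontier (D.openRect i₁ i₂ j₁ j₂))
    (hy : y ∈ C v ∩ frontier (D.openRect i₁ i₂ j₁ j₂))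
    (hz : z ∈ C v ∩ frontier (D.openRect i₁ i₂ j₁ j₂)) : x = y ∨ x = z ∨ y = z := by
  have hclosed := inter_subset_inter_right (C v)
    (frontier_Ioo_prod_Ioo_subset.trans sdiff_subset : _ ⊆ D.closedRect i₁ i₂ j₁ j₂)
  obtain ⟨-, d₁, d₂, hd⟩ := hstar v ⟨x, hclosed hx⟩
  have hopen : IsOpen (D.openRect i₁ i₂ j₁ j₂) := isOpen_Ioo.prod isOpen_Ioo
  have hray := subsingleton_ray_inter_frontier ((convex_Ioo _ _).prod (convex_Ioo _ _))
    (hopen.interior_eq.symm ▸ hp)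
  have hmem : ∀ w ∈ C v ∩ frontier (D.openRect i₁ i₂ j₁ j₂),
      w ∈ ray p d₁ ∩ frontier (D.openRect i₁ i₂ j₁ j₂) ∪
        ray p d₂ ∩ frontier (D.openRect i₁ i₂ j₁ j₂) := fun w hw =>
    (hd (hclosed hw)).imp (⟨·, hw.2⟩) (⟨·, hw.2⟩)
  exact eq_or_eq_or_eq_of_mem_union (hray d₁) (hray d₂) (hmem x hx) (hmem y hy) (hmem z hz)

theorem eq_or_eq_or_eq_of_mem_frontier (h : D.IsAdapted C S) (hF : D.graph.IsFace F)
    (hx : x ∈ C v ∩ frontier F) (hy : y ∈ C v ∩ frontier F) (hz : z ∈ C v ∩ frontier F) :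
    x = y ∨ x = z ∨ y = z := by
  obtain ⟨_, _, _, _, ⟨hfine, rfl, rfl⟩ | ⟨q, hq, rfl, rfl, rfl, rfl⟩, rfl⟩ | ⟨hF, -⟩ :=
    isCell_or_disjoint_frame_of_isFace hF
  · exact h.eq_or_eq_or_eq_of_mem_frontier_fine hfine hx hy hz
  · obtain ⟨p, hp, -, hstar⟩ := h.exists_starIn q hq
    exact eq_or_eq_or_eq_of_starIn hp hstar hx hy hz
  · have hdisj : Disjoint (closure F) (D.openRect 0 D.N 0 D.N) :=
      (hF.mono_right openRect_subset_closedRect).closure_left (isOpen_Ioo.prod isOpen_Ioo)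
    exact (disjoint_left.1 hdisj hx.2.1 (h.subset_openRect v hx.1)).elim

end IsAdapted

end BlockGrid

/-! ### Local structure of piecewise linear curves -/

section Topology

open scoped Topology

theorem exists_castSucc_le_lt_succ {α : Type*} [LinearOrder α] {n : ℕ} {t : Fin (n + 1) → α} {s : α}
    (h₀ : t 0 ≤ s) (h₁ : s < t (Fin.last n)) : ∃ i : Fin n, t i.castSucc ≤ s ∧ s < t i.succ := by
  by_contra! h
  exact h₁.not_ge (Fin.induction (motive := fun i => t i ≤ s) h₀ h (Fin.last n))

theorem exists_castSucc_lt_le_succ {α : Type*} [LinearOrder α] {n : ℕ} {t : Fin (n + 1) → α} {s : α}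
    (h₀ : t 0 < s) (h₁ : s ≤ t (Fin.last n)) : ∃ i : Fin n, t i.castSucc < s ∧ s ≤ t i.succ := by
  by_contra! h
  exact h₁.not_gt (Fin.induction (motive := fun i => t i < s) h₀ h (Fin.last n))

theorem Icc_subset_iUnion_Icc_castSucc_succ {α : Type*} [LinearOrder α] {n : ℕ}
    {t : Fin (n + 1) → α} (h : t 0 < t (Fin.last n)) :
    Icc (t 0) (t (Fin.last n)) ⊆ ⋃ i : Fin n, Icc (t i.castSucc) (t i.succ) := fun s hs => by
  rw [mem_iUnion]
  obtain h₁ | rfl := hs.2.lt_or_eq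
  · exact (exists_castSucc_le_lt_succ hs.1 h₁).imp fun _ hi => ⟨hi.1, hi.2.le⟩
  · exact (exists_castSucc_lt_le_succ h hs.2).imp fun _ hi => ⟨hi.1.le, hi.2⟩

theorem exists_mem_nhds_image_inter_subset {X Y : Type*} [TopologicalSpace X] [TopologicalSpace Y]
    [T2Space Y] {f : X → Y} {K U : Set X} {x : X} (hK : IsCompact K) (hf : ContinuousOn f K)
    (hinj : InjOn f K) (hx : x ∈ K) (hU : U ∈ 𝓝 x) :
    ∃ W ∈ 𝓝 (f x), f '' K ∩ W ⊆ f '' (K ∩ U) := by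
  have := isCompact_iff_compactSpace.1 hK
  have hemb := hf.domRestrict.isClosedEmbedding hinj.injective
  obtain ⟨W, hW, hWU⟩ := (hemb.nhds_eq_comap ⟨x, hx⟩ ▸ preimage_coe_mem_nhds_subtype.2
    (mem_nhdsWithin_of_mem_nhds hU) : _ ∈ Filter.comap _ _)
  refine ⟨W, hW, ?_⟩
  rintro _ ⟨⟨y, hy, rfl⟩, hyW⟩
  exact ⟨y, ⟨hy, hWU (a := ⟨y, hy⟩) hyW⟩, rfl⟩

section Affine

variable {γ : ℝ → Pt} {a b : ℝ}

theorem AffOn.exists_dir (h : AffOn γ a b) :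
    ∃ d : Pt, ∀ s ∈ Icc a b, ∀ x ∈ Icc a b, γ x = γ s + (x - s) • d := by
  obtain ⟨c, d, hd⟩ := h
  refine ⟨d, fun s hs x hx => ?_⟩
  rw [hd x hx, hd s hs]
  ext <;> simp <;> ring

theorem AffOn.continuousOn (h : AffOn γ a b) : ContinuousOn γ (Icc a b) := by
  obtain ⟨c, d, hd⟩ := h
  refine ContinuousOn.congr (f := fun x => (c.1 + x * d.1, c.2 + x * d.2)) ?_ hd
  fun_prop

theorem AffOn.subsingleton_fiber (h : AffOn γ a b) (f : Pt →ₗ[ℝ] ℝ) {c : ℝ} (hc : f (γ a) ≠ c) :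
    {x ∈ Icc a b | f (γ x) = c}.Subsingleton := by
  obtain ⟨d, hd⟩ := h.exists_dir
  rintro x ⟨hx, hxc⟩ y ⟨hy, hyc⟩
  have ha : a ∈ Icc a b := ⟨le_rfl, hx.1.trans hx.2⟩
  have hlin : ∀ z ∈ Icc a b, f (γ z) = f (γ a) + (z - a) * f d := fun z hz => by
    rw [hd a ha z hz, map_add, map_smul, smul_eq_mul]
  have hfd : f d ≠ 0 := fun h0 => hc (by rw [← hxc, hlin x hx, h0, mul_zero, add_zero])
  have heq := (hlin x hx).symm.trans ((hxc.trans hyc.symm).trans (hlin y hy))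
  exact sub_left_injective (mul_right_cancel₀ hfd (add_left_cancel heq))

end Affine

namespace IsPLCurve

variable {γ : ℝ → Pt} {s : ℝ} {p : Pt}

theorem continuousOn (h : IsPLCurve γ) : ContinuousOn γ (Icc 0 1) := by
  obtain ⟨n, -, t, h₀, h₁, -, haff⟩ := h
  refine ContinuousOn.mono (s := ⋃ i : Fin n, Icc (t i.castSucc) (t i.succ)) ?_ ?_
  · exact (locallyFinite_of_finite _).continuousOn_iUnion (fun _ => isClosed_Icc)
      fun i => (haff i).continuousOn
  · simpa only [h₀, h₁] using Icc_subset_iUnion_Icc_castSucc_succ (t := t) (by simp [h₀, h₁])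

theorem isCompact_im (h : IsPLCurve γ) : IsCompact (Im γ) :=
  isCompact_Icc.image_of_continuousOn h.continuousOn

theorem exists_mem_nhds_im_inter_subset (h : IsPLCurve γ) (hs : s ∈ Icc (0 : ℝ) 1) {U : Set ℝ}
    (hU : U ∈ 𝓝 s) : ∃ W ∈ 𝓝 (γ s), Im γ ∩ W ⊆ γ '' (Icc 0 1 ∩ U) :=
  exists_mem_nhds_image_inter_subset isCompact_Icc h.continuousOn h.choose_spec.1 hs hU

theorem exists_dir_right (h : IsPLCurve γ) (hs : s ∈ Icc (0 : ℝ) 1) :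
    ∃ d : Pt, ∀ᶠ x in 𝓝 s, x ∈ Icc s 1 → γ x = γ s + (x - s) • d := by
  obtain ⟨n, -, t, h₀, h₁, -, haff⟩ := h
  obtain hs₁ | rfl := hs.2.lt_or_eq
  · obtain ⟨i, hi, hi'⟩ := exists_castSucc_le_lt_succ (h₀.trans_le hs.1) (hs₁.trans_eq h₁.symm)
    obtain ⟨d, hd⟩ := (haff i).exists_dir
    refine ⟨d, (eventually_lt_nhds hi').mono fun x hx hsx => ?_⟩
    exact hd s ⟨hi, hi'.le⟩ x ⟨hi.trans hsx.1, hx.le⟩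
  · refine ⟨0, .of_forall fun x hx => ?_⟩
    simp [le_antisymm hx.2 hx.1]

theorem exists_dir_left (h : IsPLCurve γ) (hs : s ∈ Icc (0 : ℝ) 1) :
    ∃ d : Pt, ∀ᶠ x in 𝓝 s, x ∈ Icc 0 s → γ x = γ s + (s - x) • d := by
  obtain ⟨n, -, t, h₀, h₁, -, haff⟩ := h
  obtain hs₀ | rfl := hs.1.lt_or_eq
  · obtain ⟨i, hi, hi'⟩ := exists_castSucc_lt_le_succ (h₀.trans_lt hs₀) (hs.2.trans_eq h₁.symm)
    obtain ⟨d, hd⟩ := (haff i).exists_dir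
    refine ⟨-d, (eventually_gt_nhds hi).mono fun x hx hsx => ?_⟩
    rw [hd s ⟨hi.le, hi'⟩ x ⟨hx.le, hsx.2.trans hi'⟩, smul_neg, ← neg_smul, neg_sub]
  · refine ⟨0, .of_forall fun x hx => ?_⟩
    simp [le_antisymm hx.2 hx.1]

theorem exists_im_inter_subset_rays (h : IsPLCurve γ) (hp : p ∈ Im γ) :
    ∃ U ∈ 𝓝 p, ∃ d₁ d₂, Im γ ∩ U ⊆ ray p d₁ ∪ ray p d₂ := by
  obtain ⟨s, hs, rfl⟩ := hp
  obtain ⟨d₁, hd₁⟩ := h.exists_dir_right hs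
  obtain ⟨d₂, hd₂⟩ := h.exists_dir_left hs
  obtain ⟨U, hU, hsub⟩ := h.exists_mem_nhds_im_inter_subset hs (hd₁.and hd₂)
  refine ⟨U, hU, d₁, d₂, fun q hq => ?_⟩
  obtain ⟨x, ⟨hx, hright, hleft⟩, rfl⟩ := hsub hq
  obtain hsx | hxs := le_total s x
  · exact .inl ⟨x - s, sub_nonneg.2 hsx, (hright ⟨hsx, hx.2⟩).symm⟩
  · exact .inr ⟨s - x, sub_nonneg.2 hxs, (hleft ⟨hx.1, hxs⟩).symm⟩

theorem exists_finite_breaks (h : IsPLCurve γ) :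
    ∃ T : Set Pt, T.Finite ∧ T ⊆ Im γ ∧ γ 0 ∈ T ∧ γ 1 ∈ T ∧ ∀ p ∈ Im γ \ T,
      ∃ U ∈ 𝓝 p, ∃ d : Pt, d ≠ 0 ∧ (∀ q ∈ Im γ ∩ U, ∃ τ : ℝ, q = p + τ • d) ∧
        ∀ f : Pt →ₗ[ℝ] ℝ, f d = 0 → {z ∈ Im γ | f z = f p}.Infinite := by
  obtain ⟨n, hinj, t, h₀, h₁, hmono, haff⟩ := id h
  have ht : ∀ i, t i ∈ Icc (0 : ℝ) 1 := fun i =>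
    ⟨h₀ ▸ hmono (Fin.zero_le i), h₁ ▸ hmono (Fin.le_last i)⟩
  refine ⟨range (γ ∘ t), finite_range _, range_subset_iff.2 fun i => ⟨t i, ht i, rfl⟩,
    ⟨0, by simp [h₀]⟩, ⟨Fin.last n, by simp [h₁]⟩, ?_⟩
  rintro _ ⟨⟨s, hs, rfl⟩, hsT⟩
  have hne : ∀ i, t i ≠ s := fun i hi => hsT ⟨i, congrArg γ hi⟩
  obtain ⟨i, hi, hi'⟩ := exists_castSucc_le_lt_succ (h₀.trans_le hs.1)
    (lt_of_le_of_ne (hs.2.trans_eq h₁.symm) (hne _).symm)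
  replace hi := lt_of_le_of_ne hi (hne _)
  obtain ⟨d, hd⟩ := (haff i).exists_dir
  have hsI := Ioo_subset_Icc_self ⟨hi, hi'⟩
  obtain ⟨U, hU, hsub⟩ := h.exists_mem_nhds_im_inter_subset hs (Icc_mem_nhds hi hi')
  refine ⟨U, hU, d, ?_, fun q hq => ?_, fun f hf => ?_⟩
  · rintro rfl
    have heq := hd s hsI _ (left_mem_Icc.2 (hi.trans hi').le)
    rw [smul_zero, add_zero] at heq
    exact hne _ (hinj (ht _) hs heq)
  · obtain ⟨x, ⟨-, hx⟩, rfl⟩ := hsub hq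
    exact ⟨x - s, hd s hsI x hx⟩
  · have hpiece := Icc_subset_Icc (ht i.castSucc).1 (ht i.succ).2
    refine ((Icc_infinite (hi.trans hi')).image (hinj.mono hpiece)).mono ?_
    rintro _ ⟨x, hx, rfl⟩
    refine ⟨⟨x, hpiece hx, rfl⟩, ?_⟩
    rw [hd s hsI x hx, map_add, map_smul, hf, smul_zero, add_zero]

theorem finite_setOf_infinite_fiber (h : IsPLCurve γ) (f : Pt →ₗ[ℝ] ℝ) :
    {c | {z ∈ Im γ | f z = c}.Infinite}.Finite := by
  obtain ⟨n, -, t, h₀, h₁, -, haff⟩ := h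
  refine (finite_range fun i => f (γ (t i))).subset fun c hc => not_not.1 fun hcT => hc ?_
  refine (finite_iUnion fun i => (((haff i).subsingleton_fiber f
    fun hi => hcT ⟨i.castSucc, hi⟩).image γ).finite).subset ?_
  rintro _ ⟨⟨x, hx, rfl⟩, hxc⟩
  have hcover := Icc_subset_iUnion_Icc_castSucc_succ (t := t) (by simp [h₀, h₁])
  rw [h₀, h₁] at hcover
  obtain ⟨i, hi⟩ := mem_iUnion.1 (hcover hx)
  exact mem_iUnion.2 ⟨i, x, ⟨hi, hxc⟩, rfl⟩

end IsPLCurve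

theorem straightIn_of_subset_line {V : Type*} {C : V → Set Pt} {U : Set Pt} {p d : Pt} {v : V}
    (hU : ∀ w, w ≠ v → C w ∩ U = ∅) (hline : ∀ q ∈ C v ∩ U, ∃ τ : ℝ, q = p + τ • d)
    (hinf : ∀ f : Pt →ₗ[ℝ] ℝ, f d = 0 → {z ∈ C v | f z = f p}.Infinite) : StraightIn C U := by
  have honly : ∀ w, (C w ∩ U).Nonempty → w = v := fun w hw =>
    not_not.1 fun hwv => hw.ne_empty (hU w hwv)
  have hline' : ∀ q ∈ U ∩ ⋃ w, C w, ∃ τ : ℝ, q = p + τ • d := fun q ⟨hqU, hq⟩ => by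
    obtain ⟨w, hw⟩ := mem_iUnion.1 hq
    obtain rfl := honly w ⟨q, hw, hqU⟩
    exact hline q ⟨hw, hqU⟩
  refine ⟨fun u w hu hw => (honly u hu).trans (honly w hw).symm, ?_, fun x hx y hy hxy f hf => ?_⟩
  · refine (collinear_iff_exists_forall_eq_smul_vadd _).2 ⟨p, d, fun q hq => ?_⟩
    exact (hline' q hq).imp fun τ hτ => hτ.trans (add_comm _ _)
  · obtain ⟨τ, rfl⟩ := hline' x hx
    obtain ⟨τ', rfl⟩ := hline' y hy
    have hfd : f d = 0 := by
      simp only [map_add, map_smul, smul_eq_mul, add_right_inj] at hf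
      exact not_not.1 fun h0 => hxy (by rw [mul_right_cancel₀ h0 hf])
    refine (hinf f hfd).mono fun z hz => ⟨mem_iUnion_of_mem v hz.1, ?_⟩
    simp only [hz.2, map_add, map_smul, hfd, smul_zero, add_zero]

section Family

variable {V : Type*} [Finite V] {R : V → ℝ → Pt}

theorem finite_setOf_infinite_fiber_iUnion (hPL : ∀ v, IsPLCurve (R v)) (f : Pt →ₗ[ℝ] ℝ) :
    {c | {z ∈ ⋃ v, Im (R v) | f z = c}.Infinite}.Finite := by
  refine (finite_iUnion fun v => (hPL v).finite_setOf_infinite_fiber f).subset fun c hc => ?_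
  by_contra hfin
  have hfin' : ∀ v, {z ∈ Im (R v) | f z = c}.Finite := fun v =>
    not_infinite.1 fun hv => hfin (mem_iUnion.2 ⟨v, hv⟩)
  refine hc ((finite_iUnion hfin').subset ?_)
  rintro z ⟨hz, hzc⟩
  obtain ⟨v, hv⟩ := mem_iUnion.1 hz
  exact mem_iUnion.2 ⟨v, hv, hzc⟩

theorem exists_mem_nhds_starIn (hPL : ∀ v, IsPLCurve (R v)) (p : Pt) :
    ∃ U ∈ 𝓝 p, StarIn (fun v => Im (R v)) p U := by
  have h : ∀ v, ∃ U ∈ 𝓝 p, (Im (R v) ∩ U).Nonempty →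
      p ∈ Im (R v) ∧ ∃ d₁ d₂, Im (R v) ∩ U ⊆ ray p d₁ ∪ ray p d₂ := fun v => by
    by_cases hp : p ∈ Im (R v)
    · obtain ⟨U, hU, hrays⟩ := (hPL v).exists_im_inter_subset_rays hp
      exact ⟨U, hU, fun _ => ⟨hp, hrays⟩⟩
    · exact ⟨_, (hPL v).isCompact_im.isClosed.isOpen_compl.mem_nhds hp, fun ⟨_, hq, hq'⟩ =>
        (hq' hq).elim⟩
  choose U hU hstar using h
  refine ⟨⋂ v, U v, Filter.iInter_mem.2 hU, fun v hv => ?_⟩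
  have hsub := inter_subset_inter_right (Im (R v)) (iInter_subset U v)
  exact (hstar v (hv.mono hsub)).imp_right fun ⟨d₁, d₂, hd⟩ => ⟨d₁, d₂, hsub.trans hd⟩

theorem exists_mem_nhds_im_inter_eq_empty (hPL : ∀ v, IsPLCurve (R v)) {p : Pt} {v : V}
    (hp : p ∉ InPts R) (hv : p ∈ Im (R v)) : ∃ U ∈ 𝓝 p, ∀ w, w ≠ v → Im (R w) ∩ U = ∅ := by
  have hopen : IsOpen (⋂ w : {w // w ≠ v}, (Im (R w))ᶜ) :=
    isOpen_iInter_of_finite fun w => (hPL w).isCompact_im.isClosed.isOpen_compl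
  refine ⟨_, hopen.mem_nhds (mem_iInter.2 fun w hw => hp ⟨w, v, w.2, hw, hv⟩), fun w hw => ?_⟩
  exact eq_empty_of_forall_notMem fun q hq => mem_iInter.1 hq.2 ⟨w, hw⟩ hq.1

theorem exists_finite_straightIn (hPL : ∀ v, IsPLCurve (R v)) (hfin : (InPts R).Finite) :
    ∃ S : Set Pt, S.Finite ∧ SpecialPts R ⊆ S ∧ S ⊆ ⋃ v, Im (R v) ∧
      ∀ p ∈ (⋃ v, Im (R v)) \ S, ∃ U ∈ 𝓝 p, StraightIn (fun v => Im (R v)) U := by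
  choose T hTfin hTsub hT₀ hT₁ hT using fun v => (hPL v).exists_finite_breaks
  refine ⟨(⋃ v, T v) ∪ InPts R, (finite_iUnion hTfin).union hfin, ?_, ?_, fun p ⟨hp, hpS⟩ => ?_⟩
  · rintro z (⟨v, rfl | rfl⟩ | ⟨v, hz, hbend⟩ | hz)
    · exact .inl (mem_iUnion_of_mem v (hT₀ v))
    · exact .inl (mem_iUnion_of_mem v (hT₁ v))
    · refine .inl (mem_iUnion_of_mem v (not_not.1 fun hzT => ?_))
      obtain ⟨U, hU, d, hd, hline, -⟩ := hT v z ⟨hz, hzT⟩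
      obtain ⟨ε, hε, hεU⟩ := Metric.mem_nhds_iff.1 hU
      refine hbend ε hε ⟨_, ⟨z, d, hd, rfl⟩, fun x hx => ?_⟩
      exact hline x ⟨hx.1, hεU hx.2⟩
    · exact .inr hz
  · refine union_subset (iUnion_mono hTsub) ?_
    rintro p ⟨u, -, -, hp, -⟩
    exact mem_iUnion_of_mem u hp
  · obtain ⟨v, hv⟩ := mem_iUnion.1 hp
    obtain ⟨U, hU, d, -, hline, hinf⟩ := hT v p ⟨hv, fun h => hpS (.inl (mem_iUnion_of_mem v h))⟩
    obtain ⟨U', hU', hempty⟩ := exists_mem_nhds_im_inter_eq_empty hPL (fun h => hpS (.inr h)) hv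
    refine ⟨U ∩ U', Filter.inter_mem hU hU', straightIn_of_subset_line (v := v) ?_ ?_ hinf⟩
    · exact fun w hw => subset_empty_iff.1 ((inter_subset_inter_right _ inter_subset_right).trans
        (hempty w hw).subset)
    · exact fun q hq => hline q ⟨hq.1, hq.2.1⟩

end Family

end Topology

/-! ### Separating points of the line by a uniform subdivision -/

/-- The subdivision points `x₀ + a * δ`, `a ≤ n`, separate the points of `T`: their intervals
contain at most one point of `T` each, no two adjacent ones and not the outermost ones contain a
point of `T`. -/
structure Separates (x₀ δ : ℝ) (n : ℕ) (T : Set ℝ) : Prop where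
  pos : 0 < δ
  lt_of_mem : ∀ t ∈ T, x₀ + δ < t
  add_lt_of_mem : ∀ t ∈ T, t + δ < x₀ + n * δ
  ne_of_mem : ∀ t ∈ T, ∀ a : ℕ, t ≠ x₀ + a * δ
  gap : ∀ s ∈ T, ∀ t ∈ T, s ≠ t → 2 * δ < |s - t|

/-- The index of the interval of the subdivision `x₀ + a * δ` that contains `t ≥ x₀`. -/
noncomputable def intervalIndex (x₀ δ t : ℝ) : ℕ := ⌊(t - x₀) / δ⌋₊

namespace Separates

variable {x₀ δ s t : ℝ} {n : ℕ} {T : Set ℝ}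

theorem mem_Ioo (h : Separates x₀ δ n T) (ht : t ∈ T) :
    t ∈ Ioo (x₀ + intervalIndex x₀ δ t * δ) (x₀ + (intervalIndex x₀ δ t + 1) * δ) := by
  have hpos := h.pos
  have hnonneg : 0 ≤ (t - x₀) / δ := div_nonneg (by linarith [h.lt_of_mem t ht]) hpos.le
  have hle := (le_div_iff₀ hpos).1 (Nat.floor_le hnonneg)
  have hlt := (div_lt_iff₀ hpos).1 (Nat.lt_floor_add_one ((t - x₀) / δ))
  rw [intervalIndex]
  exact ⟨lt_of_le_of_ne (by linarith) (h.ne_of_mem t ht _).symm, by linarith⟩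

theorem one_le_intervalIndex (h : Separates x₀ δ n T) (ht : t ∈ T) :
    1 ≤ intervalIndex x₀ δ t := by
  rw [intervalIndex, Nat.one_le_floor_iff, one_le_div₀ h.pos]
  linarith [h.lt_of_mem t ht]

theorem intervalIndex_add_two_le (h : Separates x₀ δ n T) (ht : t ∈ T) :
    intervalIndex x₀ δ t + 2 ≤ n := by
  have hlt : (intervalIndex x₀ δ t + 1) * δ < n * δ := by
    linarith [(h.mem_Ioo ht).1, h.add_lt_of_mem t ht]
  exact_mod_cast lt_of_mul_lt_mul_right hlt h.pos.le

theorem intervalIndex_ne_succ (h : Separates x₀ δ n T) (hs : s ∈ T) (ht : t ∈ T) :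
    intervalIndex x₀ δ t ≠ intervalIndex x₀ δ s + 1 := fun heq => by
  have hs' := h.mem_Ioo hs
  have ht' := h.mem_Ioo ht
  rw [heq, Nat.cast_succ] at ht'
  have hst : s < t := hs'.2.trans ht'.1
  have hgap := h.gap s hs t ht hst.ne
  rw [abs_sub_comm, abs_of_pos (sub_pos.2 hst)] at hgap
  linarith [hs'.1, ht'.2]

theorem eq_of_mem_Ioo (h : Separates x₀ δ n T) (hs : s ∈ T) (ht : t ∈ T)
    (hst : s ∈ Ioo (x₀ + intervalIndex x₀ δ t * δ) (x₀ + (intervalIndex x₀ δ t + 1) * δ)) :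
    s = t := by
  by_contra hne
  have ht' := h.mem_Ioo ht
  have hgap := h.gap s hs t ht hne
  have hlt : |s - t| < δ := abs_lt.2 ⟨by linarith [hst.1, ht'.2], by linarith [hst.2, ht'.1]⟩
  linarith [h.pos]

end Separates

/-! ### Generic positions -/

/-- The lines at the offsets `η` from `o` are in general position with respect to the set `C` and
its special points `S`. -/
structure IsGenericOrigin {ι : Type*} (C S : Set Pt) (η : ι → ℝ) (o : Pt) : Prop where
  finite_fst_eq : ∀ i, {z ∈ C | z.1 = o.1 + η i}.Finite
  finite_snd_eq : ∀ i, {z ∈ C | z.2 = o.2 + η i}.Finite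
  notMem : ∀ i j, (o.1 + η i, o.2 + η j) ∉ C
  fst_ne : ∀ p ∈ S, ∀ i, p.1 ≠ o.1 + η i
  snd_ne : ∀ p ∈ S, ∀ i, p.2 ≠ o.2 + η i

theorem exists_lt_forall_add_notMem {ι : Type*} [Countable ι] {E : Set ℝ} (hE : E.Countable)
    (η : ι → ℝ) (b : ℝ) : ∃ x < b, ∀ i, x + η i ∉ E := by
  have hcount : (⋃ i, (· + η i) ⁻¹' E).Countable :=
    countable_iUnion fun i => hE.preimage_of_injOn (add_left_injective (η i)).injOn
  obtain ⟨x, hx, hxb⟩ := (hcount.dense_compl ℝ).exists_lt b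
  exact ⟨x, hxb, fun i hi => hx (mem_iUnion.2 ⟨i, hi⟩)⟩

theorem exists_isGenericOrigin {ι : Type*} [Countable ι] {C S : Set Pt}
    (hfst : {c | {z ∈ C | z.1 = c}.Infinite}.Countable)
    (hsnd : {c | {z ∈ C | z.2 = c}.Infinite}.Countable) (hS : S.Countable) (η : ι → ℝ) (b : ℝ) :
    ∃ o : Pt, o.1 < b ∧ o.2 < b ∧ IsGenericOrigin C S η o := by
  obtain ⟨x, hxb, hx⟩ := exists_lt_forall_add_notMem (hfst.union (hS.image Prod.fst)) η b
  have hxfin : ∀ i, {z ∈ C | z.1 = x + η i}.Finite := fun i =>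
    not_infinite.1 fun h => hx i (.inl h)
  have hcount := countable_iUnion fun i => ((hxfin i).image Prod.snd).countable
  obtain ⟨y, hyb, hy⟩ :=
    exists_lt_forall_add_notMem ((hsnd.union (hS.image Prod.snd)).union hcount) η b
  refine ⟨(x, y), hxb, hyb, hxfin, ?_, ?_, ?_, ?_⟩
  · exact fun i => not_infinite.1 fun h => hy i (.inl (.inl h))
  · exact fun i j h => hy j (.inr (mem_iUnion.2 ⟨i, _, ⟨h, rfl⟩, rfl⟩))
  · exact fun p hp i h => hx i (.inr ⟨p, hp, h⟩)
  · exact fun p hp i h => hy i (.inl (.inr ⟨p, hp, h⟩))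

/-! ### Coarse grids and their refinements -/

open scoped Topology in
theorem eventually_two_mul_lt_abs_sub {T : Set ℝ} (hT : T.Finite) :
    ∀ᶠ δ in 𝓝[>] (0 : ℝ), ∀ s ∈ T, ∀ t ∈ T, s ≠ t → 2 * δ < |s - t| := by
  refine (Filter.eventually_all_finite hT).2 fun s _ => (Filter.eventually_all_finite hT).2
    fun t _ => Filter.eventually_imp_distrib_left.2 fun hst => ?_
  filter_upwards [Ioo_mem_nhdsGT (half_pos (abs_pos.2 (sub_ne_zero.2 hst)))] with δ hδ
  linarith [hδ.2]

/-- A square mesh of width `δ` around the set `C` whose cells separate the points of `S`, in a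
position that remains generic if each cell is divided into `K × K` equal parts, for every `K`. -/
structure CoarseGrid (C S : Set Pt) where
  origin : Pt
  δ : ℝ
  n : ℕ
  two_le_n : 2 ≤ n
  δ_pos : 0 < δ
  subset : C ⊆ Ioo origin.1 (origin.1 + n * δ) ×ˢ Ioo origin.2 (origin.2 + n * δ)
  separates_fst : Separates origin.1 δ n (Prod.fst '' S)
  separates_snd : Separates origin.2 δ n (Prod.snd '' S)
  isGenericOrigin : IsGenericOrigin C S (fun q : ℕ × ℕ => q.1 * (δ / q.2)) origin

open scoped Topology in
theorem exists_coarseGrid {C S : Set Pt} (hC : Bornology.IsBounded C) (hS : S.Finite) (hSC : S ⊆ C)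
    (hfst : {c | {z ∈ C | z.1 = c}.Infinite}.Countable)
    (hsnd : {c | {z ∈ C | z.2 = c}.Infinite}.Countable) {P : ℝ → Prop}
    (hP : ∀ᶠ δ in 𝓝[>] (0 : ℝ), P δ) : ∃ G : CoarseGrid C S, P G.δ := by
  obtain ⟨δ, ⟨⟨hPδ, hδ : 0 < δ⟩, hgap₁⟩, hgap₂⟩ :=
    (((hP.and self_mem_nhdsWithin).and (eventually_two_mul_lt_abs_sub (hS.image Prod.fst))).and
      (eventually_two_mul_lt_abs_sub (hS.image Prod.snd))).exists
  obtain ⟨M, hM⟩ := isBounded_iff_forall_norm_le.1 hC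
  obtain ⟨o, ho₁, ho₂, hgen⟩ := exists_isGenericOrigin hfst hsnd hS.countable
    (fun q : ℕ × ℕ => q.1 * (δ / q.2)) (-M - δ)
  have hlarge : ∀ x : ℝ, ∀ᶠ n : ℕ in Filter.atTop, M + δ < x + n * δ := fun x =>
    (Filter.tendsto_atTop_add_const_left _ x
      (tendsto_natCast_atTop_atTop.atTop_mul_const hδ)).eventually_gt_atTop _
  obtain ⟨n, ⟨hn₁, hn₂⟩, hn⟩ :=
    (((hlarge o.1).and (hlarge o.2)).and (Filter.eventually_ge_atTop 2)).exists
  have hbound₁ : ∀ z ∈ C, -M ≤ z.1 ∧ z.1 ≤ M := fun z hz =>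
    abs_le.1 ((norm_fst_le z).trans (hM z hz))
  have hbound₂ : ∀ z ∈ C, -M ≤ z.2 ∧ z.2 ≤ M := fun z hz =>
    abs_le.1 ((norm_snd_le z).trans (hM z hz))
  refine ⟨⟨o, δ, n, hn, hδ, fun z hz => ?_, ⟨hδ, ?_, ?_, ?_, hgap₁⟩, ⟨hδ, ?_, ?_, ?_, hgap₂⟩,
    hgen⟩, hPδ⟩
  · obtain ⟨h₁, h₂⟩ := hbound₁ z hz
    obtain ⟨h₃, h₄⟩ := hbound₂ z hz
    exact ⟨⟨by linarith, by linarith⟩, by linarith, by linarith⟩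
  · exact forall_mem_image.2 fun p hp => by linarith [hbound₁ p (hSC hp)]
  · exact forall_mem_image.2 fun p hp => by linarith [hbound₁ p (hSC hp)]
  · exact forall_mem_image.2 fun p hp a => by simpa using hgen.fst_ne p hp (a, 1)
  · exact forall_mem_image.2 fun p hp => by linarith [hbound₂ p (hSC hp)]
  · exact forall_mem_image.2 fun p hp => by linarith [hbound₂ p (hSC hp)]
  · exact forall_mem_image.2 fun p hp a => by simpa using hgen.snd_ne p hp (a, 1)

theorem dist_le_of_mem_Icc_prod_Icc {a b c d r : ℝ} {x y : Pt} (hx : x ∈ Icc a b ×ˢ Icc c d)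
    (hy : y ∈ Icc a b ×ˢ Icc c d) (hab : b - a ≤ r) (hcd : d - c ≤ r) : dist x y ≤ r :=
  max_le ((Real.dist_le_of_mem_Icc hx.1 hy.1).trans hab)
    ((Real.dist_le_of_mem_Icc hx.2 hy.2).trans hcd)

namespace CoarseGrid

variable {C S : Set Pt} (G : CoarseGrid C S) {K i j : ℕ} {p x : Pt} {q : ℕ × ℕ}

/-- The column and the row of the cell of the coarse grid that contains `p`. -/
noncomputable def index (p : Pt) : ℕ × ℕ :=
  (intervalIndex G.origin.1 G.δ p.1, intervalIndex G.origin.2 G.δ p.2)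

/-- The open cell of the coarse grid in a given column and row. -/
def block (q : ℕ × ℕ) : Set Pt :=
  Ioo (G.origin.1 + q.1 * G.δ) (G.origin.1 + (q.1 + 1) * G.δ) ×ˢ
    Ioo (G.origin.2 + q.2 * G.δ) (G.origin.2 + (q.2 + 1) * G.δ)

theorem mem_block_index (hp : p ∈ S) : p ∈ G.block (G.index p) :=
  ⟨G.separates_fst.mem_Ioo (mem_image_of_mem _ hp), G.separates_snd.mem_Ioo (mem_image_of_mem _ hp)⟩

theorem eq_of_mem_block_index (hx : x ∈ S) (hp : p ∈ S) (h : x ∈ G.block (G.index p)) : x = p :=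
  Prod.ext (G.separates_fst.eq_of_mem_Ioo (mem_image_of_mem _ hx) (mem_image_of_mem _ hp) h.1)
    (G.separates_snd.eq_of_mem_Ioo (mem_image_of_mem _ hx) (mem_image_of_mem _ hp) h.2)

theorem strictMono_line (hK : 4 ≤ K) (c : ℝ) : StrictMono fun i : ℕ => c + i * (G.δ / K) := by
  have hK' : (0 : ℝ) < K := by exact_mod_cast (by lia : 0 < K)
  exact (Nat.strictMono_cast.mul_const (div_pos G.δ_pos hK')).const_add c

/-- The grid obtained by dividing the cells of a coarse grid into `K × K` equal parts, except for
those that contain a point of `S`. -/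
noncomputable def refine (hK : 4 ≤ K) : BlockGrid where
  n := G.n
  K := K
  blocks := G.index '' S
  two_le_n := G.two_le_n
  four_le_K := hK
  fst_bounds := forall_mem_image.2 fun _ hp =>
    ⟨G.separates_fst.one_le_intervalIndex (mem_image_of_mem _ hp),
      G.separates_fst.intervalIndex_add_two_le (mem_image_of_mem _ hp)⟩
  snd_bounds := forall_mem_image.2 fun _ hp =>
    ⟨G.separates_snd.one_le_intervalIndex (mem_image_of_mem _ hp),
      G.separates_snd.intervalIndex_add_two_le (mem_image_of_mem _ hp)⟩
  fst_ne_succ := forall_mem_image.2 fun _ hp => forall_mem_image.2 fun _ hx =>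
    G.separates_fst.intervalIndex_ne_succ (mem_image_of_mem _ hp) (mem_image_of_mem _ hx)
  snd_ne_succ := forall_mem_image.2 fun _ hp => forall_mem_image.2 fun _ hx =>
    G.separates_snd.intervalIndex_ne_succ (mem_image_of_mem _ hp) (mem_image_of_mem _ hx)
  X i := G.origin.1 + i * (G.δ / K)
  Y i := G.origin.2 + i * (G.δ / K)
  strictMono_X := G.strictMono_line hK _
  strictMono_Y := G.strictMono_line hK _

variable {G} {hK : 4 ≤ K}

theorem refine_X_mul (a : ℕ) : (G.refine hK).X (a * K) = G.origin.1 + a * G.δ := by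
  have hK' : (K : ℝ) ≠ 0 := by exact_mod_cast (by lia : K ≠ 0)
  simp only [refine, Nat.cast_mul]
  field_simp

theorem refine_Y_mul (a : ℕ) : (G.refine hK).Y (a * K) = G.origin.2 + a * G.δ := by
  have hK' : (K : ℝ) ≠ 0 := by exact_mod_cast (by lia : K ≠ 0)
  simp only [refine, Nat.cast_mul]
  field_simp

theorem openRect_refine (q : ℕ × ℕ) : (G.refine hK).openRect
    (q.1 * K) ((q.1 + 1) * K) (q.2 * K) ((q.2 + 1) * K) = G.block q := by
  simp only [BlockGrid.openRect, refine_X_mul, refine_Y_mul, block, Nat.cast_succ]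

theorem closedRect_refine_block_subset (hp : p ∈ G.block q) : (G.refine hK).closedRect
    (q.1 * K) ((q.1 + 1) * K) (q.2 * K) ((q.2 + 1) * K) ⊆ closedBall p G.δ := by
  simp only [BlockGrid.closedRect, refine_X_mul, refine_Y_mul, Nat.cast_succ]
  refine fun x hx => dist_le_of_mem_Icc_prod_Icc hx ?_ (by linarith) (by linarith)
  exact prod_mono Ioo_subset_Icc_self Ioo_subset_Icc_self hp

theorem closedRect_refine_succ_subset (hx : x ∈ (G.refine hK).closedRect i (i + 1) j (j + 1)) :
    (G.refine hK).closedRect i (i + 1) j (j + 1) ⊆ closedBall x (G.δ / K) := fun z hz =>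
  dist_le_of_mem_Icc_prod_Icc hz hx (by simp only [refine]; push_cast; linarith)
    (by simp only [refine]; push_cast; linarith)

theorem disjoint_closedRect_refine_block (hfine : (G.refine hK).IsFine i j)
    (hq : q ∈ G.index '' S) :
    Disjoint ((G.refine hK).closedRect i (i + 1) j (j + 1)) (G.block q) := by
  rw [← openRect_refine (hK := hK)]
  refine disjoint_left.2 fun x hx hxq => hfine.2.2 q hq ?_
  have hX := (G.refine hK).strictMono_X
  have hY := (G.refine hK).strictMono_Y
  exact ⟨⟨Nat.lt_succ_iff.1 (hX.lt_iff_lt.1 (hxq.1.1.trans_le hx.1.2)),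
      hX.lt_iff_lt.1 (hx.1.1.trans_lt hxq.1.2)⟩,
    Nat.lt_succ_iff.1 (hY.lt_iff_lt.1 (hxq.2.1.trans_le hx.2.2)),
      hY.lt_iff_lt.1 (hx.2.1.trans_lt hxq.2.2)⟩

section IsAdapted

variable {V : Type*} {C : V → Set Pt} {S : Set Pt} {G : CoarseGrid (⋃ v, C v) S} {K i j : ℕ}
  {hK : 4 ≤ K}

theorem straightIn_closedRect_refine (hfine : (G.refine hK).IsFine i j)
    (hstraight : ∀ x ∈ (⋃ v, C v) \ ⋃ q ∈ G.index '' S, G.block q,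
      StraightIn C (closedBall x (G.δ / K))) :
    StraightIn C ((G.refine hK).closedRect i (i + 1) j (j + 1)) := by
  by_cases h : Disjoint ((G.refine hK).closedRect i (i + 1) j (j + 1)) (⋃ v, C v)
  · exact .of_disjoint h
  · obtain ⟨x, hx, hxC⟩ := not_disjoint_iff.1 h
    refine (hstraight x ⟨hxC, fun hxb => ?_⟩).mono (closedRect_refine_succ_subset hx)
    obtain ⟨q, hq, hxq⟩ := mem_iUnion₂.1 hxb
    exact disjoint_left.1 (disjoint_closedRect_refine_block hfine hq) hx hxq

theorem isAdapted_refine (hSC : S ⊆ ⋃ v, C v)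
    (hstar : ∀ p ∈ S, StarIn C p (closedBall p G.δ))
    (hstraight : ∀ x ∈ (⋃ v, C v) \ ⋃ q ∈ G.index '' S, G.block q,
      StraightIn C (closedBall x (G.δ / K))) : (G.refine hK).IsAdapted C S where
  subset_openRect v z hz := by
    have hN : (G.refine hK).openRect 0 (G.refine hK).N 0 (G.refine hK).N =
        Ioo G.origin.1 (G.origin.1 + G.n * G.δ) ×ˢ Ioo G.origin.2 (G.origin.2 + G.n * G.δ) := by
      have hX := refine_X_mul (G := G) (hK := hK) 0
      have hY := refine_Y_mul (G := G) (hK := hK) 0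
      rw [zero_mul, Nat.cast_zero, zero_mul, add_zero] at hX hY
      rw [BlockGrid.openRect, BlockPattern.N, ← refine_X_mul (hK := hK),
        ← refine_Y_mul (hK := hK), hX, hY]
      rfl
    exact hN ▸ G.subset (mem_iUnion_of_mem v hz)
  notMem_of_mem_verts z hz v hzv := by
    obtain ⟨p, -, rfl⟩ := BlockGrid.mem_verts.1 hz
    exact G.isGenericOrigin.notMem (p.1, K) (p.2, K) (mem_iUnion_of_mem v hzv)
  finite_fst_eq k := G.isGenericOrigin.finite_fst_eq (k, K)
  finite_snd_eq k := G.isGenericOrigin.finite_snd_eq (k, K)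
  subset_iUnion := hSC
  disjoint_of_isFine i j hfine := disjoint_left.2 fun p hp hpc =>
    disjoint_left.1 (disjoint_closedRect_refine_block hfine (mem_image_of_mem _ hp)) hpc
      (G.mem_block_index hp)
  straightIn i j hfine := straightIn_closedRect_refine hfine hstraight
  exists_starIn := forall_mem_image.2 fun p hp => by
    have hblock := G.mem_block_index hp
    refine ⟨p, ?_, ?_, (hstar p hp).mono (closedRect_refine_block_subset hblock)⟩
    · exact openRect_refine (G := G) (hK := hK) (G.index p) ▸ hblock
    · exact fun x hx => G.eq_of_mem_block_index hx.1 hp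
        (openRect_refine (G := G) (hK := hK) (G.index p) ▸ hx.2)

end IsAdapted

end CoarseGrid

open scoped Topology in
theorem exists_blockGrid_isAdapted {V : Type*} {C : V → Set Pt} {S : Set Pt}
    (hC : IsCompact (⋃ v, C v)) (hS : S.Finite) (hSC : S ⊆ ⋃ v, C v)
    (hfst : {c | {z ∈ ⋃ v, C v | z.1 = c}.Infinite}.Countable)
    (hsnd : {c | {z ∈ ⋃ v, C v | z.2 = c}.Infinite}.Countable)
    (hstar : ∀ p ∈ S, ∃ U ∈ 𝓝 p, StarIn C p U)
    (hstraight : ∀ p ∈ (⋃ v, C v) \ S, ∃ U ∈ 𝓝 p, StraightIn C U) :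
    ∃ D : BlockGrid, D.IsAdapted C S := by
  have hsmall : ∀ᶠ δ in 𝓝[>] (0 : ℝ), ∀ p ∈ S, StarIn C p (closedBall p δ) := by
    refine (Filter.eventually_all_finite hS).2 fun p hp => ?_
    obtain ⟨U, hU, hpU⟩ := hstar p hp
    obtain ⟨ε, hε, hεU⟩ := Metric.mem_nhds_iff.1 hU
    filter_upwards [Ioo_mem_nhdsGT hε] with δ hδ
    exact hpU.mono ((closedBall_subset_ball hδ.2).trans hεU)
  obtain ⟨G, hG⟩ := exists_coarseGrid hC.isBounded hS hSC hfst hsnd hsmall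
  -- The blocks are fixed before the Lebesgue number that determines `K` is known; this is why a
  -- coarse grid is in generic position for all subdivisions at once.
  set A := (⋃ v, C v) \ ⋃ q ∈ G.index '' S, G.block q
  have hA : IsCompact A :=
    hC.diff (isOpen_biUnion fun q _ => isOpen_Ioo.prod isOpen_Ioo)
  have hAS : ∀ x ∈ A, ∃ U ∈ 𝓝 x, StraightIn C U := fun x hx =>
    hstraight x ⟨hx.1, fun hxS => hx.2 (mem_biUnion (mem_image_of_mem _ hxS)
      (G.mem_block_index hxS))⟩
  obtain ⟨ε, hε, hball⟩ : ∃ ε > 0, ∀ x ∈ A, StraightIn C (ball x ε) := by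
    choose U hU hxU using hAS
    obtain ⟨ε, hε, hεU⟩ := Metric.uniformity_basis_dist.lebesgue_number_lemma_nhds' hA hU
    refine ⟨ε, hε, fun x hx => ?_⟩
    obtain ⟨y, hy⟩ := hεU x hx
    exact (hxU y y.2).mono fun z hz => hy (mem_ball'.1 hz)
  obtain ⟨K, hK⟩ := exists_nat_gt (max 4 (G.δ / ε))
  have hK₄ : 4 ≤ K := by exact_mod_cast ((le_max_left _ _).trans_lt hK).le
  have hKε : G.δ / K < ε := by
    rw [div_lt_comm₀ (by exact_mod_cast (by lia : 0 < K)) hε]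
    exact (le_max_right _ _).trans_lt hK
  exact ⟨G.refine hK₄, CoarseGrid.isAdapted_refine hSC hG fun x hx =>
    (hball x hx).mono (closedBall_subset_ball hKε)⟩

/-! ### Refining grid graphs -/

theorem exists_blockGrid_isAdapted_im {V : Type*} [Finite V] {R : V → ℝ → Pt}
    (hPL : ∀ v, IsPLCurve (R v)) (hfin : (InPts R).Finite) : ∃ (D : BlockGrid) (S : Set Pt),
      SpecialPts R ⊆ S ∧ D.IsAdapted (fun v => Im (R v)) S := by
  obtain ⟨S, hS, hRS, hSR, hstraight⟩ := exists_finite_straightIn hPL hfin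
  obtain ⟨D, hD⟩ := exists_blockGrid_isAdapted (isCompact_iUnion fun v => (hPL v).isCompact_im)
    hS hSR (finite_setOf_infinite_fiber_iUnion hPL (LinearMap.fst ℝ ℝ ℝ)).countable
    (finite_setOf_infinite_fiber_iUnion hPL (LinearMap.snd ℝ ℝ ℝ)).countable
    (fun p _ => exists_mem_nhds_starIn hPL p) hstraight
  exact ⟨D, S, hRS, hD⟩

theorem exists_refining_grid_graph_general {V : Type*} [Finite V] {R : V → ℝ → Pt}
    (hPL : ∀ v, IsPLCurve (R v)) (hfin : (InPts R).Finite)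
    (htriple : ∀ p : Pt, ∀ u v w : V, u ≠ v → u ≠ w → v ≠ w →
      ¬(p ∈ Im (R u) ∧ p ∈ Im (R v) ∧ p ∈ Im (R w))) :
    ∃ H : GridPlaneGraph,
      (∃ (N : ℕ) (G₀ : SimpleGraph (Fin N)), ThreeConnected G₀ ∧
        IsSubdivisionOf H.graph G₀) ∧
      (∀ F : Set Pt, H.IsFace F → Bornology.IsBounded F →
        ∃ x₁ x₂ y₁ y₂ : ℝ, F = Ioo x₁ x₂ ×ˢ Ioo y₁ y₂) ∧
      (∀ F : Set Pt, H.IsFace F → ¬ Bornology.IsBounded F →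
        ∀ v : V, F ∩ Im (R v) = ∅) ∧
      (∀ x ∈ H.verts, ∀ v : V, x ∉ Im (R v)) ∧
      (∀ e ∈ H.edges, ∀ z ∈ SpecialPts R, z ∉ segment ℝ e.1 e.2) ∧
      (∀ F : Set Pt, H.IsFace F → (F ∩ SpecialPts R).Subsingleton) ∧
      (∀ F₁ F₂ : Set Pt, H.IsFace F₁ → H.IsFace F₂ → F₁ ≠ F₂ →
        (F₁ ∩ SpecialPts R).Nonempty → (F₂ ∩ SpecialPts R).Nonempty →
        (closure F₁ ∩ closure F₂).Finite) ∧
      (∀ e ∈ H.edges, (segment ℝ e.1 e.2 ∩ ⋃ v : V, Im (R v)).Subsingleton) ∧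
      (∀ F : Set Pt, H.IsFace F → ∀ u v w : V, u ≠ v → u ≠ w → v ≠ w →
        ¬((F ∩ Im (R u)).Nonempty ∧ (F ∩ Im (R v)).Nonempty ∧
          (F ∩ Im (R w)).Nonempty)) ∧
      (∀ F : Set Pt, H.IsFace F → ∀ u v : V, u ≠ v →
        (F ∩ Im (R u)).Nonempty → (F ∩ Im (R v)).Nonempty →
        (F ∩ Im (R u) ∩ Im (R v)).Nonempty) ∧
      (∀ F : Set Pt, H.IsFace F → ∀ v : V, ∀ x y z : Pt,
        x ∈ Im (R v) ∩ frontier F → y ∈ Im (R v) ∩ frontier F →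
        z ∈ Im (R v) ∩ frontier F → x = y ∨ x = z ∨ y = z) := by
  obtain ⟨D, S, hRS, hD⟩ := exists_blockGrid_isAdapted_im hPL hfin
  have hFS : ∀ F : Set Pt, F ∩ SpecialPts R ⊆ F ∩ S := fun F => inter_subset_inter_right F hRS
  refine ⟨D.graph, D.exists_threeConnected_isSubdivisionOf, fun F hF hb => ?_,
    fun F hF hb v => hD.inter_eq_empty_of_not_isBounded hF hb v,
    hD.notMem_of_mem_verts, fun e he z hz => hD.notMem_segment he (hRS hz),
    fun F hF => (hD.subsingleton_face_inter hF).anti (hFS F), fun F₁ F₂ hF₁ hF₂ hne h₁ h₂ => ?_,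
    fun e he => hD.subsingleton_segment_inter he, fun F hF u v w huv huw hvw ⟨hu, hv, hw⟩ => ?_,
    fun F hF u v huv hu hv => ?_,
    fun F hF v x y z hx hy hz => hD.eq_or_eq_or_eq_of_mem_frontier hF hx hy hz⟩
  · obtain ⟨_, _, _, _, -, rfl⟩ | ⟨-, hF'⟩ := BlockGrid.isCell_or_disjoint_frame_of_isFace hF
    exacts [⟨_, _, _, _, rfl⟩, (hF' hb).elim]
  · rw [hD.closure_inter_closure_eq_empty hF₁ hF₂ hne (h₁.mono (hFS F₁)) (h₂.mono (hFS F₂))]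
    exact finite_empty
  · obtain ⟨p, -, hp⟩ := hD.exists_mem_inter_of_ne hF huv hu hv
    exact htriple p u v w huv huw hvw ⟨hp u hu, hp v hv, hp w hw⟩
  · obtain ⟨p, hpF, hp⟩ := hD.exists_mem_inter_of_ne hF huv hu hv
    exact ⟨p, ⟨hpF, hp u hu⟩, hp v hv⟩

/-- For every proper representation `R` of a graph `G` by simple
piecewise linear curves there is a plane graph `H` (drawn with horizontal and vertical
straight-line edges), a subdivision of a 3-connected planar graph, satisfying:
(P1) every internal (bounded) face of `H` is an open rectangle and the outer
(unbounded) face is disjoint from all curves of `R`;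
(P2) no curve of `R` passes through a vertex of `H` and no edge of `H` passes through a
special point of `R` (an endpoint, bend, or intersection point);
(P3) every face contains at most one special point, and no two faces containing special
points are adjacent (their closures share at most finitely many points);
(P4) every edge of `H` meets the curves of `R` in at most one point;
(P5) every face meets at most two curves of `R`, and if a face meets two curves then
those curves intersect inside it;
(P6) every curve of `R` meets the boundary of any single face at most twice. -/
theorem exists_refining_grid_graph {V : Type} [Fintype V] (G : SimpleGraph V)
    (R : V → ℝ → Pt) (hPL : ∀ v, IsPLCurve (R v)) (hrep : Represents G R)
    (hprop : IsProperRep R) :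
    ∃ H : GridPlaneGraph,
      (∃ (N : ℕ) (G₀ : SimpleGraph (Fin N)), ThreeConnected G₀ ∧
        IsSubdivisionOf H.graph G₀) ∧
      -- P1
      (∀ F : Set Pt, H.IsFace F → Bornology.IsBounded F →
        ∃ x₁ x₂ y₁ y₂ : ℝ, F = Ioo x₁ x₂ ×ˢ Ioo y₁ y₂) ∧
      (∀ F : Set Pt, H.IsFace F → ¬ Bornology.IsBounded F →
        ∀ v : V, F ∩ Im (R v) = ∅) ∧
      -- P2
      (∀ x ∈ H.verts, ∀ v : V, x ∉ Im (R v)) ∧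
      (∀ e ∈ H.edges, ∀ z ∈ SpecialPts R, z ∉ segment ℝ e.1 e.2) ∧
      -- P3
      (∀ F : Set Pt, H.IsFace F → (F ∩ SpecialPts R).Subsingleton) ∧
      (∀ F₁ F₂ : Set Pt, H.IsFace F₁ → H.IsFace F₂ → F₁ ≠ F₂ →
        (F₁ ∩ SpecialPts R).Nonempty → (F₂ ∩ SpecialPts R).Nonempty →
        (closure F₁ ∩ closure F₂).Finite) ∧
      -- P4
      (∀ e ∈ H.edges, (segment ℝ e.1 e.2 ∩ ⋃ v : V, Im (R v)).Subsingleton) ∧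
      -- P5
      (∀ F : Set Pt, H.IsFace F → ∀ u v w : V, u ≠ v → u ≠ w → v ≠ w →
        ¬((F ∩ Im (R u)).Nonempty ∧ (F ∩ Im (R v)).Nonempty ∧
          (F ∩ Im (R w)).Nonempty)) ∧
      (∀ F : Set Pt, H.IsFace F → ∀ u v : V, u ≠ v →
        (F ∩ Im (R u)).Nonempty → (F ∩ Im (R v)).Nonempty →
        (F ∩ Im (R u) ∩ Im (R v)).Nonempty) ∧
      -- P6
      (∀ F : Set Pt, H.IsFace F → ∀ v : V, ∀ x y z : Pt,
        x ∈ Im (R v) ∩ frontier F → y ∈ Im (R v) ∩ frontier F →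
        z ∈ Im (R v) ∩ frontier F → x = y ∨ x = z ∨ y = z) :=
  exists_refining_grid_graph_general hPL hprop.1 hprop.2.1
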